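/- Let s₀ > d be an integer, m₁,m₂ ∈ ℝ with m₁+m₂−2 ≤ 0, a ∈ 𝒩^{m₁}_{s₀+4}, b ∈ 𝒩^{m₂}_{s₀+4}, and for R > 0 set a_R(x,ξ) := 𝒳_R(ξ)a(x,ξ), b_R(x,ξ) := 𝒳_R(ξ)b(x,ξ). Then T_{a_R} ∘ T_{b_R} = T_{a_R b_R} + (1/(2i)) T_{{a_R,b_R}} − (1/8) T_{σ(a_R,b_R)} + R(a_R,b_R), where for any s ∈ ℝ and h ∈ H^s(𝕋^d;ℂ): ‖R(a_R,b_R)h‖_{H^{s−m₁−m₂+2}} ≤ C R^{-1} |a|_{𝒩^{m₁}_{s₀+4}} |b|_{𝒩^{m₂}_{s₀+4}} ‖h‖_{H^s}. -/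

import Mathlib

open MeasureTheory Complex Real Filter

noncomputable section

namespace QLNLS

/-- Points of `ℝ^d` (resp. the torus `𝕋^d = (ℝ/2πℤ)^d`, via `2π`-periodic functions). -/
abbrev Vec (d : ℕ) := Fin d → ℝ
/-- Frequency lattice `ℤ^d`. -/
abbrev Zd (d : ℕ) := Fin d → ℤ
/-- Functions on the torus. -/
abbrev Fn (d : ℕ) := Vec d → ℂ
/-- Sequences of Fourier coefficients. -/
abbrev Seq (d : ℕ) := Zd d → ℂ
/-- Symbols `a(x, ξ)`. -/
abbrev Sym (d : ℕ) := Vec d → Vec d → ℂ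

variable {d : ℕ}

/-- Euclidean norm `|ξ|`. -/
def rnorm (ξ : Vec d) : ℝ := Real.sqrt (∑ i, (ξ i) ^ 2)

/-- Euclidean norm `|n|` of a lattice point. -/
def znorm (n : Zd d) : ℝ := Real.sqrt (∑ i, ((n i : ℝ)) ^ 2)

/-- Japanese bracket `⟨n⟩ = (1+|n|²)^{1/2}`. -/
def jb (n : Zd d) : ℝ := Real.sqrt (1 + ∑ i, ((n i : ℝ)) ^ 2)

/-- Japanese bracket `⟨ξ⟩` for real frequencies. -/
def jbR (ξ : Vec d) : ℝ := Real.sqrt (1 + ∑ i, (ξ i) ^ 2)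

/-- `2π`-periodicity in every coordinate. -/
def Periodic2pi (u : Fn d) : Prop :=
  ∀ (x : Vec d) (n : Zd d), u (fun i => x i + 2 * π * (n i : ℝ)) = u x

/-- A fundamental domain of the torus. -/
def box (d : ℕ) : Set (Vec d) := Set.univ.pi fun _ : Fin d => Set.Ioc (0 : ℝ) (2 * π)

/-- Fourier coefficient `û(n) = (2π)^{-d/2} ∫ u(x) e^{-i n·x} dx`. -/
def fCoeff (u : Fn d) (n : Zd d) : ℂ :=
  (((2 * π : ℝ) ^ (-(d : ℝ) / 2) : ℝ) : ℂ) *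
    ∫ x in box d, u x * Complex.exp (-Complex.I * ((∑ i, (n i : ℝ) * x i : ℝ) : ℂ))

/-- Squared Sobolev norm of a coefficient sequence. -/
def hsNormSq (s : ℝ) (c : Seq d) : ℝ := ∑' n : Zd d, jb n ^ (2 * s) * ‖c n‖ ^ 2

/-- Sobolev norm of a coefficient sequence. -/
def hsNorm (s : ℝ) (c : Seq d) : ℝ := Real.sqrt (hsNormSq s c)

/-- Membership of a coefficient sequence in `H^s`. -/
def InHsSeq (s : ℝ) (c : Seq d) : Prop :=
  Summable fun n : Zd d => jb n ^ (2 * s) * ‖c n‖ ^ 2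

/-- `H^s` norm of a function on the torus. -/
def sobNorm (s : ℝ) (u : Fn d) : ℝ := hsNorm s (fCoeff u)

/-- `u ∈ H^s(𝕋^d;ℂ)`: `u` is `2π`-periodic, its Fourier coefficients are `H^s`-summable,
and `u` is represented by its Fourier series. -/
def InHs (s : ℝ) (u : Fn d) : Prop :=
  Periodic2pi u ∧ InHsSeq s (fCoeff u) ∧
    ∀ x : Vec d, HasSum
      (fun n : Zd d => (((2 * π : ℝ) ^ (-(d : ℝ) / 2) : ℝ) : ℂ) * fCoeff u n *
        Complex.exp (Complex.I * ((∑ i, (n i : ℝ) * x i : ℝ) : ℂ))) (u x)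

/-- Partial derivative `∂_{x_i}` of a function. -/
def pdF (i : Fin d) (u : Fn d) : Fn d := fun x => fderiv ℝ u x (Pi.single i 1)

/-- Partial derivative `∂_{x_i}` of a symbol. -/
def pdx (i : Fin d) (a : Sym d) : Sym d := fun x ξ => fderiv ℝ (fun y => a y ξ) x (Pi.single i 1)

/-- Partial derivative `∂_{ξ_i}` of a symbol. -/
def pdxi (i : Fin d) (a : Sym d) : Sym d := fun x ξ => fderiv ℝ (fun η => a x η) ξ (Pi.single i 1)

/-- Iterated mixed partial derivative of a symbol along a list of directions
(`Sum.inl j` = `∂_{x_j}`, `Sum.inr j` = `∂_{ξ_j}`). -/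
def mderiv (L : List (Fin d ⊕ Fin d)) (a : Sym d) : Sym d :=
  L.foldr (fun i b => match i with | Sum.inl j => pdx j b | Sum.inr j => pdxi j b) a

/-- Number of `ξ`-derivatives in a list of directions. -/
def nXi (L : List (Fin d ⊕ Fin d)) : ℕ := (L.filter fun i => i.isRight).length

/-- The set of values whose supremum is the symbol seminorm `|a|_{𝒩^m_s}`. -/
def symVals (m : ℝ) (s : ℕ) (a : Sym d) : Set ℝ :=
  { r | ∃ (L : List (Fin d ⊕ Fin d)) (x ξ : Vec d), L.length ≤ s ∧
        r = jbR ξ ^ (-m + (nXi L : ℝ)) * ‖mderiv L a x ξ‖ }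

/-- Symbol seminorm `|a|_{𝒩^m_s}`. -/
def symNorm (m : ℝ) (s : ℕ) (a : Sym d) : ℝ := sSup (symVals m s a)

/-- Membership in the symbol class `𝒩^m_s`. -/
def InSymClass (m : ℝ) (s : ℕ) (a : Sym d) : Prop :=
  ContDiff ℝ (s : ℕ∞) (Function.uncurry a) ∧ (∀ ξ, Periodic2pi fun x => a x ξ) ∧
    BddAbove (symVals m s a)

/-- Poisson bracket `{a,b}`. -/
def poisson (a b : Sym d) : Sym d := fun x ξ =>
  ∑ j, (pdxi j a x ξ * pdx j b x ξ - pdx j a x ξ * pdxi j b x ξ)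

/-- The second-order bracket `σ(a,b)`. -/
def sigmaB (a b : Sym d) : Sym d := fun x ξ =>
  ∑ j, ∑ k,
    (pdxi j (pdxi k a) x ξ * pdx j (pdx k b) x ξ
      - 2 * pdx j (pdxi k a) x ξ * pdxi j (pdx k b) x ξ
      + pdx j (pdx k a) x ξ * pdxi j (pdxi k b) x ξ)

/-- An admissible cut-off function `χ`. -/
structure IsCutoff (χ : ℝ → ℝ) : Prop where
  smooth : ContDiff ℝ (⊤ : ℕ∞) χ
  mem : ∀ t : ℝ, χ t ∈ Set.Icc (0 : ℝ) 1
  eq_one : ∀ t : ℝ, |t| ≤ 5 / 4 → χ t = 1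
  eq_zero : ∀ t : ℝ, 8 / 5 ≤ |t| → χ t = 0

/-- `x`-Fourier coefficient `â(η, ξ)` of a symbol. -/
def symCoeff (a : Sym d) (η : Zd d) (ξ : Vec d) : ℂ := fCoeff (fun x => a x ξ) η

/-- Midpoint `(j+k)/2` of two lattice points. -/
def mid (j k : Zd d) : Vec d := fun i => ((j i + k i : ℤ) : ℝ) / 2

/-- The paradifferential cut-off factor `χ_ε(|j-k|/⟨j+k⟩) = χ(|j-k|/(ε⟨j+k⟩))`. -/
def cutFactor (χ : ℝ → ℝ) (ε : ℝ) (j k : Zd d) : ℝ :=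
  χ (znorm (j - k) / (ε * jb (j + k)))

/-- The Weyl paradifferential operator `T_a`, acting on Fourier coefficient sequences:
`(T_a h)^(j) = (2π)^{-d/2} Σ_k χ_ε(|j-k|/⟨j+k⟩) â(j-k,(j+k)/2) ĥ(k)`. -/
def paraC (χ : ℝ → ℝ) (ε : ℝ) (a : Sym d) (c : Seq d) : Seq d := fun j =>
  (((2 * π : ℝ) ^ (-(d : ℝ) / 2) : ℝ) : ℂ) *
    ∑' k : Zd d, ((cutFactor χ ε j k : ℝ) : ℂ) * symCoeff a (j - k) (mid j k) * c k

/-- The operator `R_a` built from the difference of two cut-offs. -/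
def remC (χ : ℝ → ℝ) (ε₁ ε₂ : ℝ) (a : Sym d) (c : Seq d) : Seq d := fun j =>
  (((2 * π : ℝ) ^ (-(d : ℝ) / 2) : ℝ) : ℂ) *
    ∑' k : Zd d, ((cutFactor χ ε₁ j k - cutFactor χ ε₂ j k : ℝ) : ℂ) *
      symCoeff a (j - k) (mid j k) * c k

/-- Wirtinger derivative `∂_{y_j} = (∂_{Re y_j} - i ∂_{Im y_j})/2`. -/
def wdP {n : ℕ} (j : Fin n) (G : (Fin n → ℂ) → ℂ) : (Fin n → ℂ) → ℂ := fun y =>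
  (fderiv ℝ G y (Pi.single j 1) - Complex.I * fderiv ℝ G y (Pi.single j Complex.I)) / 2

/-- Wirtinger derivative `∂_{ȳ_j} = (∂_{Re y_j} + i ∂_{Im y_j})/2`. -/
def wdM {n : ℕ} (j : Fin n) (G : (Fin n → ℂ) → ℂ) : (Fin n → ℂ) → ℂ := fun y =>
  (fderiv ℝ G y (Pi.single j 1) + Complex.I * fderiv ℝ G y (Pi.single j Complex.I)) / 2

/-- The 1-jet `(u, ∇u)` of a function, as a point of `ℂ^{d+1}`. -/
def jet (u : Fn d) (x : Vec d) : Fin (d + 1) → ℂ :=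
  Fin.cons (u x) fun j => pdF j u x

/-- The Hamiltonian nonlinearity
`P(u) = (∂_{ū}F)(u,∇u) - Σ_j ∂_{x_j}((∂_{ū_{x_j}}F)(u,∇u))`. -/
def Pop (F : (Fin (d + 1) → ℂ) → ℂ) (u : Fn d) : Fn d := fun x =>
  wdM 0 F (jet u x) - ∑ j, pdF j (fun y => wdM (Fin.succ j) F (jet u y)) x

/-- `F ∈ C^∞(ℂ^{d+1};ℝ)` in the real sense, with a zero of order at least 3 at the origin. -/
def GoodF (d : ℕ) (F : (Fin (d + 1) → ℂ) → ℂ) : Prop :=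
  ContDiff ℝ (⊤ : ℕ∞) F ∧ (∀ y, (F y).im = 0) ∧ ∀ k : ℕ, k ≤ 2 → iteratedFDeriv ℝ k F 0 = 0

/-- Global ellipticity (Hypothesis 1.1). -/
def Elliptic (d : ℕ) (F : (Fin (d + 1) → ℂ) → ℂ) : Prop :=
  ∃ c₁ > (0 : ℝ), ∃ c₂ > (0 : ℝ), ∀ (ξ : Vec d) (y : Fin (d + 1) → ℂ),
    (c₁ * ∑ i, (ξ i) ^ 2 ≤
      (∑ j, ∑ k, ((ξ j * ξ k : ℝ) : ℂ) *
        ((if j = k then 1 else 0) + wdP (Fin.succ j) (wdM (Fin.succ k) F) y)).re) ∧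
    (ξ ≠ 0 → c₂ ≤
      (1 + (∑ j, ∑ k, ((ξ j * ξ k : ℝ) : ℂ) * wdP (Fin.succ j) (wdM (Fin.succ k) F) y).re
            / ∑ i, (ξ i) ^ 2) ^ 2
        - ‖∑ j, ∑ k, ((ξ j * ξ k : ℝ) : ℂ) * wdM (Fin.succ j) (wdM (Fin.succ k) F) y‖ ^ 2
            / (∑ i, (ξ i) ^ 2) ^ 2)

/-- The symbol `a₂(x,ξ) = Σ_{j,k} (∂_{ū_{x_k}}∂_{u_{x_j}}F)(u,∇u) ξ_j ξ_k`. -/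
def a2sym (F : (Fin (d + 1) → ℂ) → ℂ) (u : Fn d) : Sym d := fun x ξ =>
  ∑ j, ∑ k, ((ξ j * ξ k : ℝ) : ℂ) * wdP (Fin.succ j) (wdM (Fin.succ k) F) (jet u x)

/-- The symbol `b₂(x,ξ) = Σ_{j,k} (∂_{ū_{x_k}}∂_{ū_{x_j}}F)(u,∇u) ξ_j ξ_k`. -/
def b2sym (F : (Fin (d + 1) → ℂ) → ℂ) (u : Fn d) : Sym d := fun x ξ =>
  ∑ j, ∑ k, ((ξ j * ξ k : ℝ) : ℂ) * wdM (Fin.succ j) (wdM (Fin.succ k) F) (jet u x)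

/-- The symbol `a₁(x,ξ) = (i/2) Σ_j ((∂_{ū}∂_{u_{x_j}}F) - (∂_u∂_{ū_{x_j}}F))(u,∇u) ξ_j`. -/
def a1sym (F : (Fin (d + 1) → ℂ) → ℂ) (u : Fn d) : Sym d := fun x ξ =>
  Complex.I / 2 * ∑ j, ((ξ j : ℝ) : ℂ) *
    (wdM 0 (wdP (Fin.succ j) F) (jet u x) - wdP 0 (wdM (Fin.succ j) F) (jet u x))

/-- Conjugation of a coefficient sequence: the sequence of `conj u`. -/
def starSeq (c : Seq d) : Seq d := fun n => (starRingEnd ℂ) (c (-n))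

/-- Pointwise conjugate of a function. -/
def starF (u : Fn d) : Fn d := fun x => (starRingEnd ℂ) (u x)

/-- Pointwise conjugate of a symbol. -/
def starSym (a : Sym d) : Sym d := fun x ξ => (starRingEnd ℂ) (a x ξ)

/-- The symbol `(x,ξ) ↦ conj (a(x,-ξ))`. -/
def flipSym (a : Sym d) : Sym d := fun x ξ => (starRingEnd ℂ) (a x (-ξ))

/-- The matrix `E = diag(1,-1)` as a sign vector. -/
def Em : Fin 2 → ℂ := ![1, -1]

/-- `Op^BW` of a 2×2 matrix of symbols, acting on vectors of coefficient sequences. -/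
def opBWmat (χ : ℝ → ℝ) (ε : ℝ) (A : Fin 2 → Fin 2 → Sym d) (C : Fin 2 → Seq d) :
    Fin 2 → Seq d := fun σ j => ∑ τ, paraC χ ε (A σ τ) (C τ) j

/-- The symbol `|ξ|²`. -/
def sq2sym (d : ℕ) : Sym d := fun _ ξ => (((rnorm ξ) ^ 2 : ℝ) : ℂ)

/-- The matrix of symbols `A₂(x,ξ)`. -/
def A2mat (F : (Fin (d + 1) → ℂ) → ℂ) (u : Fn d) : Fin 2 → Fin 2 → Sym d :=
  ![![a2sym F u, b2sym F u], ![flipSym (b2sym F u), a2sym F u]]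

/-- The matrix of symbols `A₁(x,ξ)`. -/
def A1mat (F : (Fin (d + 1) → ℂ) → ℂ) (u : Fn d) : Fin 2 → Fin 2 → Sym d :=
  ![![a1sym F u, 0], ![0, flipSym (a1sym F u)]]

/-- The full matrix of symbols `|ξ|²𝟙 + A₂(x,ξ) + A₁(x,ξ)`. -/
def sysSym (F : (Fin (d + 1) → ℂ) → ℂ) (u : Fn d) : Fin 2 → Fin 2 → Sym d := fun σ τ =>
  fun x ξ => (if σ = τ then sq2sym d x ξ else 0) + A2mat F u σ τ x ξ + A1mat F u σ τ x ξ

/-- `H^s` norm of a vector of coefficient sequences. -/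
def hsNormVec (s : ℝ) (C : Fin 2 → Seq d) : ℝ := hsNorm s (C 0) + hsNorm s (C 1)

/-- Membership of a vector of coefficient sequences in `H^s`. -/
def InHsVec (s : ℝ) (C : Fin 2 → Seq d) : Prop := InHsSeq s (C 0) ∧ InHsSeq s (C 1)

/-- The `L²` pairing `(U,V) = ∫ (u v̄ + ū v)`, at the level of Fourier coefficients. -/
def pairL2 (C E : Fin 2 → Seq d) : ℂ :=
  ∑' n : Zd d, (C 0 n * (starRingEnd ℂ) (E 0 n) + C 1 n * (starRingEnd ℂ) (E 1 n))

/-- The scalar `L²` pairing, at the level of Fourier coefficients. -/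
def pairS (c e : Seq d) : ℂ := ∑' n : Zd d, c n * (starRingEnd ℂ) (e n)

/-- A matrix of operators is real-to-real: it preserves the subspace `𝒰 = {(u, ū)}`. -/
def PreservesReality (M : (Fin 2 → Seq d) → (Fin 2 → Seq d)) : Prop :=
  ∀ c : Seq d, M ![c, starSeq c] 1 = starSeq (M ![c, starSeq c] 0)

/-- The coefficient vector of `(v(t), conj v(t))`. -/
def Vvec (v : ℝ → Fn d) (t : ℝ) : Fin 2 → Seq d :=
  ![fCoeff (v t), starSeq (fCoeff (v t))]

/-- `V = (v, v̄)` solves `V̇ = iE Op^BW(|ξ|²𝟙 + A₂ + A₁)V` on `[0,T)`. -/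
def SolvesLin (χ : ℝ → ℝ) (ε : ℝ) (F : (Fin (d + 1) → ℂ) → ℂ) (T : ℝ)
    (u v : ℝ → Fn d) : Prop :=
  ∀ᵐ t ∂(volume.restrict (Set.Ico (0 : ℝ) T)), ∀ (σ : Fin 2) (n : Zd d),
    HasDerivAt (fun τ => Vvec v τ σ n)
      (Complex.I * Em σ * opBWmat χ ε (sysSym F (u t)) (Vvec v t) σ n) t

/-- The regularity hypothesis (4.1):
`u ∈ L^∞([0,T);H^s) ∩ Lip([0,T);H^{s-2})`, with
`sup_t ‖u(t)‖_{H^{2s₀+7}} ≤ r` and `‖∂_t u‖_{H^{2s₀+5}} ≤ r` (as a Lipschitz bound). -/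
def RegHyp (s₀ : ℕ) (s T r : ℝ) (u : ℝ → Fn d) : Prop :=
  (∀ t ∈ Set.Ico (0 : ℝ) T, InHs s (u t)) ∧
  (∃ M : ℝ, ∀ t ∈ Set.Ico (0 : ℝ) T, sobNorm s (u t) ≤ M) ∧
  (∃ L : ℝ, ∀ t₁ ∈ Set.Ico (0 : ℝ) T, ∀ t₂ ∈ Set.Ico (0 : ℝ) T,
    sobNorm (s - 2) (u t₁ - u t₂) ≤ L * |t₁ - t₂|) ∧
  (∀ t ∈ Set.Ico (0 : ℝ) T, sobNorm (2 * (s₀ : ℝ) + 7) (u t) ≤ r) ∧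
  (∀ t₁ ∈ Set.Ico (0 : ℝ) T, ∀ t₂ ∈ Set.Ico (0 : ℝ) T,
    sobNorm (2 * (s₀ : ℝ) + 5) (u t₁ - u t₂) ≤ r * |t₁ - t₂|)

/-- `v ∈ L^∞([0,T);H^s) ∩ Lip([0,T);H^{s-2})`. -/
def RegSol (s T : ℝ) (v : ℝ → Fn d) : Prop :=
  (∀ t ∈ Set.Ico (0 : ℝ) T, InHs s (v t)) ∧
  (∃ M : ℝ, ∀ t ∈ Set.Ico (0 : ℝ) T, sobNorm s (v t) ≤ M) ∧
  (∃ L : ℝ, ∀ t₁ ∈ Set.Ico (0 : ℝ) T, ∀ t₂ ∈ Set.Ico (0 : ℝ) T,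
    sobNorm (s - 2) (v t₁ - v t₂) ≤ L * |t₁ - t₂|)

/-- The high-frequency cut-off `𝒳_R(ξ) = 1 - χ(|ξ|/R)`. -/
def cutXR (χ : ℝ → ℝ) (R : ℝ) (ξ : Vec d) : ℝ := 1 - χ (rnorm ξ / R)

/-- `ã_{2,R}(x,ξ) = |ξ|^{-2} a₂(x,ξ) 𝒳_R(ξ)`. -/
def a2til (F : (Fin (d + 1) → ℂ) → ℂ) (u : Fn d) (χ : ℝ → ℝ) (R : ℝ) : Sym d := fun x ξ =>
  ((((rnorm ξ) ^ 2)⁻¹ * cutXR χ R ξ : ℝ) : ℂ) * a2sym F u x ξ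

/-- `b̃_{2,R}(x,ξ) = |ξ|^{-2} b₂(x,ξ) 𝒳_R(ξ)`. -/
def b2til (F : (Fin (d + 1) → ℂ) → ℂ) (u : Fn d) (χ : ℝ → ℝ) (R : ℝ) : Sym d := fun x ξ =>
  ((((rnorm ξ) ^ 2)⁻¹ * cutXR χ R ξ : ℝ) : ℂ) * b2sym F u x ξ

/-- `λ₂ = ((1+ã_{2,R})² - |b̃_{2,R}|²)^{1/2}`. -/
def lam2 (F : (Fin (d + 1) → ℂ) → ℂ) (u : Fn d) (χ : ℝ → ℝ) (R : ℝ) :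
    Vec d → Vec d → ℝ := fun x ξ =>
  Real.sqrt ((1 + (a2til F u χ R x ξ).re) ^ 2 - ‖b2til F u χ R x ξ‖ ^ 2)

/-- The normalizing denominator `(2λ₂(1+ã_{2,R}+λ₂))^{1/2}`. -/
def sden (F : (Fin (d + 1) → ℂ) → ℂ) (u : Fn d) (χ : ℝ → ℝ) (R : ℝ) :
    Vec d → Vec d → ℝ := fun x ξ =>
  Real.sqrt (2 * lam2 F u χ R x ξ * (1 + (a2til F u χ R x ξ).re + lam2 F u χ R x ξ))

/-- The symbol `s₁`. -/
def s1sym (F : (Fin (d + 1) → ℂ) → ℂ) (u : Fn d) (χ : ℝ → ℝ) (R : ℝ) : Sym d := fun x ξ =>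
  (((1 + (a2til F u χ R x ξ).re + lam2 F u χ R x ξ) / sden F u χ R x ξ : ℝ) : ℂ)

/-- The symbol `s₂`. -/
def s2sym (F : (Fin (d + 1) → ℂ) → ℂ) (u : Fn d) (χ : ℝ → ℝ) (R : ℝ) : Sym d := fun x ξ =>
  -b2til F u χ R x ξ / ((sden F u χ R x ξ : ℝ) : ℂ)

/-- `ã⁺_{2,R} = λ₂ - 1`. -/
def a2plus (F : (Fin (d + 1) → ℂ) → ℂ) (u : Fn d) (χ : ℝ → ℝ) (R : ℝ) : Sym d := fun x ξ =>
  ((lam2 F u χ R x ξ - 1 : ℝ) : ℂ)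

/-- The diagonalized second-order symbol `a₂^{(1)}(x,ξ) = |ξ|² ã⁺_{2,R}(x,ξ)`. -/
def a2one (F : (Fin (d + 1) → ℂ) → ℂ) (u : Fn d) (χ : ℝ → ℝ) (R : ℝ) : Sym d := fun x ξ =>
  (((rnorm ξ) ^ 2 * (lam2 F u χ R x ξ - 1) : ℝ) : ℂ)

/-- The real scalar symbol `ℒ(x,ξ) = |ξ|² + a₂^{(1)}(x,ξ)`. -/
def Lscal (F : (Fin (d + 1) → ℂ) → ℂ) (u : Fn d) (χ : ℝ → ℝ) (R : ℝ) :
    Vec d → Vec d → ℝ := fun x ξ =>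
  (rnorm ξ) ^ 2 + (rnorm ξ) ^ 2 * (lam2 F u χ R x ξ - 1)

/-- The matrix `S(x,ξ)`. -/
def Smat (F : (Fin (d + 1) → ℂ) → ℂ) (u : Fn d) (χ : ℝ → ℝ) (R : ℝ) (x ξ : Vec d) :
    Matrix (Fin 2) (Fin 2) ℂ :=
  !![s1sym F u χ R x ξ, s2sym F u χ R x ξ;
     (starRingEnd ℂ) (s2sym F u χ R x ξ), s1sym F u χ R x ξ]

/-- The matrix `S^{-1}(x,ξ)`. -/
def SmatInv (F : (Fin (d + 1) → ℂ) → ℂ) (u : Fn d) (χ : ℝ → ℝ) (R : ℝ) (x ξ : Vec d) :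
    Matrix (Fin 2) (Fin 2) ℂ :=
  !![s1sym F u χ R x ξ, -s2sym F u χ R x ξ;
     -(starRingEnd ℂ) (s2sym F u χ R x ξ), s1sym F u χ R x ξ]

/-- The matrix `Ã_{2,R}(x,ξ)`. -/
def A2tilMat (F : (Fin (d + 1) → ℂ) → ℂ) (u : Fn d) (χ : ℝ → ℝ) (R : ℝ) (x ξ : Vec d) :
    Matrix (Fin 2) (Fin 2) ℂ :=
  !![a2til F u χ R x ξ, b2til F u χ R x ξ;
     (starRingEnd ℂ) (b2til F u χ R x (-ξ)), a2til F u χ R x ξ]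

/-- The matrix `E = diag(1,-1)`. -/
def EmatM : Matrix (Fin 2) (Fin 2) ℂ := !![1, 0; 0, -1]

/-- The matrix of symbols `S^{-1}(x,ξ)`. -/
def SinvMatSym (F : (Fin (d + 1) → ℂ) → ℂ) (u : Fn d) (χ : ℝ → ℝ) (R : ℝ) :
    Fin 2 → Fin 2 → Sym d :=
  ![![s1sym F u χ R, fun x ξ => -s2sym F u χ R x ξ],
    ![fun x ξ => -(starRingEnd ℂ) (s2sym F u χ R x ξ), s1sym F u χ R]]

/-- The entry `s₁^{(1)}` of the matrix `S₁`. -/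
def s1_1 (F : (Fin (d + 1) → ℂ) → ℂ) (u : Fn d) (χ : ℝ → ℝ) (R : ℝ) : Sym d := fun x ξ =>
  1 / (2 * Complex.I) *
    (poisson (s2sym F u χ R) (starSym (s2sym F u χ R)) x ξ * s1sym F u χ R x ξ
      + 2 * poisson (s1sym F u χ R) (s2sym F u χ R) x ξ *
          (starRingEnd ℂ) (s2sym F u χ R x ξ))

/-- The entry `s₂^{(1)}` of the matrix `S₁`. -/
def s2_1 (F : (Fin (d + 1) → ℂ) → ℂ) (u : Fn d) (χ : ℝ → ℝ) (R : ℝ) : Sym d := fun x ξ =>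
  1 / (2 * Complex.I) *
    (poisson (s2sym F u χ R) (starSym (s2sym F u χ R)) x ξ * s2sym F u χ R x ξ
      + 2 * poisson (s1sym F u χ R) (s2sym F u χ R) x ξ * s1sym F u χ R x ξ)

/-- The matrix `S₁(x,ξ)`. -/
def S1mat (F : (Fin (d + 1) → ℂ) → ℂ) (u : Fn d) (χ : ℝ → ℝ) (R : ℝ) (x ξ : Vec d) :
    Matrix (Fin 2) (Fin 2) ℂ :=
  (1 / (2 * Complex.I)) •
    (!![poisson (s2sym F u χ R) (starSym (s2sym F u χ R)) x ξ,
          2 * poisson (s1sym F u χ R) (s2sym F u χ R) x ξ;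
        -2 * poisson (s1sym F u χ R) (starSym (s2sym F u χ R)) x (-ξ),
          poisson (s2sym F u χ R) (starSym (s2sym F u χ R)) x (-ξ)] *
      Smat F u χ R x ξ)

/-- The symbol `g₁`. -/
def g1sym (F : (Fin (d + 1) → ℂ) → ℂ) (u : Fn d) (χ : ℝ → ℝ) (R : ℝ) : Sym d := fun x ξ =>
  1 / (2 * Complex.I) * poisson (s1_1 F u χ R) (s1sym F u χ R) x ξ
    - 1 / (2 * Complex.I) * poisson (s2_1 F u χ R) (starSym (s2sym F u χ R)) x ξ
    + 1 / 8 * sigmaB (s2sym F u χ R) (starSym (s2sym F u χ R)) x ξ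

/-- The symbol `g₂`. -/
def g2sym (F : (Fin (d + 1) → ℂ) → ℂ) (u : Fn d) (χ : ℝ → ℝ) (R : ℝ) : Sym d := fun x ξ =>
  -(1 / (2 * Complex.I)) * poisson (s1_1 F u χ R) (s2sym F u χ R) x ξ
    + 1 / (2 * Complex.I) * poisson (s2_1 F u χ R) (s1sym F u χ R) x ξ

/-- The derivative operator `∂_{x_i}` at the level of Fourier coefficients. -/
def dOp (i : Fin d) (c : Seq d) : Seq d := fun n => Complex.I * ((n i : ℝ) : ℂ) * c n

/-- A positive constant depending monotonically on a size parameter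
(hence bounded from above as the parameter goes to zero). -/
def GoodConst (C : ℝ → ℝ) : Prop := Monotone C ∧ ∀ x : ℝ, 0 < C x

/-! On the Fourier side `T_A T_B` and the three operators it is compared with have kernels indexed
by `(j, l, k)`, depending on `p = j - l`, `q = l - k` and the midpoint `ξ = (j + k) / 2`. The
composition samples `Â(p, ·) B̂(q, ·)` at `(j + l) / 2 = ξ + q / 2` and `(l + k) / 2 = ξ - p / 2`,
so expanding `t ↦ Â(p, ξ + t q / 2) B̂(q, ξ - t p / 2)` to second order at `t = 0` produces
exactly the symbols `A B`, `{A, B} / (2i)` and `-σ(A, B) / 8`, since `∂_x` is multiplication by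
`i p` or `i q`. The third-order Taylor remainder has order `m - 3`, where `m` is the sum of the
orders of `A` and `B`. Where the cutoffs of the operators disagree, `|p| + |q| ≳ ε ⟨k⟩`, and the
decay of the Fourier coefficients in `p`, `q` pays for three powers of `⟨k⟩`. The kernel of the
remainder is thus dominated by `⟨k⟩^{m - 3}` times a convolution of summable weights in `p` and
`q`, and Young's inequality gives a gain of three derivatives with respect to `T_A T_B`.

For `R ≥ 1/4` one of the three derivatives is traded for the factor `R⁻¹`: as a symbol of order
`m₁ + 1`, `𝒳_R a` has norm `≲ R⁻¹ |a|`. For `R < 1/4`, `𝒳_R` and `𝒳_{1/4}` agree near every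
midpoint, because a nonzero midpoint has norm at least `1/2`, and only these values enter the
operators. -/

/-! ### Fourier coefficients on the torus -/

/-- The normalising constant `(2π)^{-d/2}` of the Fourier coefficients. -/
def fourierConst (d : ℕ) : ℝ := (2 * π : ℝ) ^ (-(d : ℝ) / 2)

lemma fourierConst_pos (d : ℕ) : 0 < fourierConst d := Real.rpow_pos_of_pos (by positivity) _

lemma norm_fourierConst (d : ℕ) : ‖(fourierConst d : ℂ)‖ = fourierConst d :=
  Complex.norm_of_nonneg (fourierConst_pos d).le

lemma fourierConst_mul_self (d : ℕ) : fourierConst d * fourierConst d = ((2 * π) ^ d)⁻¹ := by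
  rw [fourierConst, ← Real.rpow_add (by positivity), ← Real.rpow_natCast,
    ← Real.rpow_neg (by positivity)]
  congr 1
  ring

lemma box_subset_Icc (d : ℕ) : box d ⊆ Set.Icc (0 : Vec d) (fun _ => 2 * π) := fun _ hx =>
  ⟨fun i => (hx i trivial).1.le, fun i => (hx i trivial).2⟩

lemma measurableSet_box (d : ℕ) : MeasurableSet (box d) :=
  MeasurableSet.univ_pi fun _ => measurableSet_Ioc

lemma integrableOn_box {E : Type*} [NormedAddCommGroup E] {u : Vec d → E} (hu : Continuous u) :
    IntegrableOn u (box d) :=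
  (hu.continuousOn.integrableOn_compact isCompact_Icc).mono_set (box_subset_Icc d)

lemma volume_box_lt_top (d : ℕ) : volume (box d) < ⊤ :=
  (measure_mono (box_subset_Icc d)).trans_lt isCompact_Icc.measure_lt_top

lemma volume_real_box (d : ℕ) : volume.real (box d) = (2 * π) ^ d := by
  rw [Measure.real, box, Real.volume_pi_Ioc,
    ← ENNReal.ofReal_prod_of_nonneg fun i _ => by simp only [sub_zero]; positivity]
  simp only [sub_zero, Finset.prod_const, Finset.card_univ, Fintype.card_fin]
  exact ENNReal.toReal_ofReal (by positivity)

/-- The character `x ↦ e^{i n·x}` of the torus. -/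
def torusChar (n : Zd d) : Fn d := fun x =>
  Complex.exp (Complex.I * ((∑ i, (n i : ℝ) * x i : ℝ) : ℂ))

lemma continuous_torusChar (n : Zd d) : Continuous (torusChar n) := by
  unfold torusChar
  fun_prop

lemma integrable_mul_torusChar {u : Fn d} (hu : Continuous u) (n : Zd d) :
    Integrable (fun x => u x * torusChar n x) (volume.restrict (box d)) :=
  integrableOn_box (hu.mul (continuous_torusChar n))

lemma norm_torusChar (n : Zd d) (x : Vec d) : ‖torusChar n x‖ = 1 := by
  rw [torusChar, mul_comm, Complex.norm_exp_ofReal_mul_I]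

lemma torusChar_add (m n : Zd d) (x : Vec d) :
    torusChar (m + n) x = torusChar m x * torusChar n x := by
  simp only [torusChar, ← Complex.exp_add, ← mul_add, ← Complex.ofReal_add,
    ← Finset.sum_add_distrib, Pi.add_apply, Int.cast_add, add_mul]

lemma fCoeff_eq (u : Fn d) (n : Zd d) :
    fCoeff u n = fourierConst d * ∫ x in box d, u x * torusChar (-n) x := by
  simp only [fCoeff, fourierConst, torusChar, Pi.neg_apply, Int.cast_neg, neg_mul,
    Finset.sum_neg_distrib, Complex.ofReal_neg, mul_neg]

lemma norm_fCoeff_le {u : Fn d} {M : ℝ} (h : ∀ x, ‖u x‖ ≤ M) (n : Zd d) :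
    ‖fCoeff u n‖ ≤ fourierConst d * (2 * π) ^ d * M := by
  have hint := norm_setIntegral_le_of_norm_le_const (μ := volume) (volume_box_lt_top d)
    (f := fun x => u x * torusChar (-n) x) (C := M)
    (fun x _ => by rw [norm_mul, norm_torusChar, mul_one]; exact h x)
  rw [volume_real_box, mul_comm M] at hint
  rw [fCoeff_eq, norm_mul, norm_fourierConst, mul_assoc]
  exact mul_le_mul_of_nonneg_left hint (fourierConst_pos d).le

lemma fCoeff_add {u v : Fn d} (hu : Continuous u) (hv : Continuous v) (n : Zd d) :
    fCoeff (fun x => u x + v x) n = fCoeff u n + fCoeff v n := by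
  simp only [fCoeff_eq, add_mul]
  rw [integral_add (integrable_mul_torusChar hu _) (integrable_mul_torusChar hv _), mul_add]

lemma fCoeff_const_mul (c : ℂ) (u : Fn d) (n : Zd d) :
    fCoeff (fun x => c * u x) n = c * fCoeff u n := by
  simp only [fCoeff_eq, mul_assoc, integral_const_mul]
  ring

lemma fCoeff_sub {u v : Fn d} (hu : Continuous u) (hv : Continuous v) (n : Zd d) :
    fCoeff (fun x => u x - v x) n = fCoeff u n - fCoeff v n := by
  simp only [fCoeff_eq, sub_mul]
  rw [integral_sub (integrable_mul_torusChar hu _) (integrable_mul_torusChar hv _), mul_sub]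

lemma fCoeff_sum {ι : Type*} (t : Finset ι) {u : ι → Fn d} (hu : ∀ i, Continuous (u i))
    (n : Zd d) : fCoeff (fun x => ∑ i ∈ t, u i x) n = ∑ i ∈ t, fCoeff (u i) n := by
  simp only [fCoeff_eq, Finset.sum_mul]
  rw [integral_finsetSum _ fun i _ => integrable_mul_torusChar (hu i) _, Finset.mul_sum]

/-- The covering map `ℝ^d → (ℝ/ℤ)^d`. -/
def toUnitTorus (x : Vec d) : UnitAddTorus (Fin d) := fun i => (x i : UnitAddCircle)

lemma isQuotientMap_toUnitTorus : Topology.IsQuotientMap (toUnitTorus (d := d)) :=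
  (IsOpenQuotientMap.piMap fun _ : Fin d =>
    QuotientAddGroup.isOpenQuotientMap_mk (N := AddSubgroup.zmultiples (1 : ℝ))).isQuotientMap

lemma exists_int_of_toUnitTorus_eq {x y : Vec d} (h : toUnitTorus x = toUnitTorus y) :
    ∃ n : Zd d, ∀ i, x i = y i + n i := by
  have hi : ∀ i, ∃ n : ℤ, x i = y i + n := by
    intro i
    have hxy : ((x i - y i : ℝ) : UnitAddCircle) = 0 := by
      rw [AddCircle.coe_sub, sub_eq_zero]
      exact congrFun h i
    obtain ⟨n, hn⟩ := AddCircle.coe_eq_zero_iff (p := (1 : ℝ)).mp hxy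
    exact ⟨n, by rw [zsmul_one] at hn; linarith⟩
  exact ⟨fun i => (hi i).choose, fun i => (hi i).choose_spec⟩

lemma exists_lift_toUnitTorus {u : Fn d} (hc : Continuous u) (hp : Periodic2pi u) :
    ∃ g : C(UnitAddTorus (Fin d), ℂ), ∀ x, g (toUnitTorus x) = u ((2 * π) • x) := by
  let f : C(Vec d, ℂ) := ⟨fun x => u ((2 * π) • x), hc.comp (continuous_const_smul _)⟩
  have hf : Function.FactorsThrough f (toUnitTorus (d := d)) := by
    intro x y hxy
    obtain ⟨n, hn⟩ := exists_int_of_toUnitTorus_eq hxy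
    refine Eq.trans (congrArg u ?_) (hp ((2 * π) • y) n)
    ext i
    simp only [Pi.smul_apply, smul_eq_mul, hn i, mul_add]
  exact ⟨isQuotientMap_toUnitTorus.lift (f := ⟨_, isQuotientMap_toUnitTorus.continuous⟩) f hf,
    fun x => DFunLike.congr_fun (isQuotientMap_toUnitTorus.lift_comp
      (f := ⟨_, isQuotientMap_toUnitTorus.continuous⟩) f hf) x⟩

lemma mFourier_toUnitTorus (n : Zd d) (x : Vec d) :
    UnitAddTorus.mFourier n (toUnitTorus x) = torusChar n ((2 * π) • x) := by
  simp only [UnitAddTorus.mFourier, ContinuousMap.coe_mk, toUnitTorus, fourier_coe_apply,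
    ← Complex.exp_sum, torusChar]
  congr 1
  push_cast
  rw [Finset.mul_sum]
  refine Finset.sum_congr rfl fun i _ => ?_
  simp only [Pi.smul_apply, smul_eq_mul, Complex.ofReal_mul, Complex.ofReal_ofNat]
  ring

open scoped Pointwise in
lemma smul_unitCube (d : ℕ) :
    (2 * π) • (Set.univ.pi fun _ : Fin d => Set.Ioc (0 : ℝ) 1) = box d := by
  rw [Set.smul_set_univ_pi, box]
  congr 1
  ext i : 1
  rw [Pi.smul_apply, LinearOrderedField.smul_Ioc (by positivity), mul_zero, mul_one]

lemma mFourierCoeff_of_lift {u : Fn d} {g : UnitAddTorus (Fin d) → ℂ}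
    (hg : ∀ x, g (toUnitTorus x) = u ((2 * π) • x)) (n : Zd d) :
    UnitAddTorus.mFourierCoeff g n = fourierConst d * fCoeff u n := by
  have hcube : {x : Vec d | ∀ i, x i ∈ Set.Ioc ((0 : Vec d) i) ((0 : Vec d) i + 1)} =
      Set.univ.pi fun _ => Set.Ioc (0 : ℝ) 1 := by
    ext x; simp [Set.mem_pi]
  have hint : ∀ x : Vec d, UnitAddTorus.mFourier (-n) (fun i => (x i : UnitAddCircle)) •
      g (fun i => (x i : UnitAddCircle)) =
        (fun y => u y * torusChar (-n) y) ((2 * π) • x) := fun x => by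
    rw [smul_eq_mul, mul_comm]
    exact congrArg₂ (· * ·) (hg x) (mFourier_toUnitTorus (-n) x)
  rw [UnitAddTorus.mFourierCoeff_eq_integral g n 0, hcube, funext hint,
    Measure.setIntegral_comp_smul_of_pos volume (fun y => u y * torusChar (-n) y) _
      (by positivity : (0 : ℝ) < 2 * π), smul_unitCube, fCoeff_eq, ← mul_assoc,
    ← Complex.ofReal_mul, fourierConst_mul_self, Module.finrank_fin_fun, Complex.real_smul]

lemma hasSum_fourierSeries {u : Fn d} (hc : Continuous u) (hp : Periodic2pi u)
    (hs : Summable (fCoeff u)) (x : Vec d) :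
    HasSum (fun n => (fourierConst d : ℂ) * fCoeff u n * torusChar n x) (u x) := by
  obtain ⟨g, hg⟩ := exists_lift_toUnitTorus hc hp
  have hcoef : ∀ n, UnitAddTorus.mFourierCoeff g n = fourierConst d * fCoeff u n :=
    mFourierCoeff_of_lift hg
  have hsum : Summable (UnitAddTorus.mFourierCoeff g) := by
    rw [funext hcoef]
    exact hs.mul_left _
  have hx : (2 * π) • (2 * π)⁻¹ • x = x := smul_inv_smul₀ (by positivity) x
  have hseries := UnitAddTorus.hasSum_mFourier_series_apply_of_summable hsum
    (toUnitTorus ((2 * π)⁻¹ • x))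
  simpa only [hg, hcoef, mFourier_toUnitTorus, hx, smul_eq_mul] using hseries

lemma hasSum_fCoeff_mul {u v : Fn d} (hu : Continuous u) (hpu : Periodic2pi u)
    (hv : Continuous v) (hs : Summable (fCoeff u)) (n : Zd d) :
    HasSum (fun p => (fourierConst d : ℂ) * (fCoeff u p * fCoeff v (n - p)))
      (fCoeff (fun x => u x * v x) n) := by
  let F : Zd d → Fn d := fun p x =>
    fourierConst d * fCoeff u p * torusChar p x * (v x * torusChar (-n) x)
  have hF : ∀ p, Integrable (F p) (volume.restrict (box d)) := fun p =>
    integrableOn_box ((continuous_const.mul (continuous_torusChar p)).mul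
      (hv.mul (continuous_torusChar (-n))))
  have hnorm : ∀ p x, ‖F p x‖ = fourierConst d * ‖fCoeff u p‖ * ‖v x‖ := fun p x => by
    simp only [F, norm_mul, norm_torusChar, norm_fourierConst, mul_one]
  have hsum : Summable fun p => ∫ x in box d, ‖F p x‖ := by
    simp_rw [hnorm, integral_const_mul]
    exact (hs.norm.mul_left _).mul_right _
  have htsum : ∀ x, ∑' p, F p x = u x * v x * torusChar (-n) x := fun x => by
    rw [mul_assoc]
    exact ((hasSum_fourierSeries hu hpu hs x).mul_right _).tsum_eq
  have hterm : ∀ p, ∫ x in box d, F p x = fCoeff u p * fCoeff v (n - p) := fun p => by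
    have hFp : ∀ x, F p x = fourierConst d * fCoeff u p * (v x * torusChar (-(n - p)) x) :=
      fun x => by rw [neg_sub, sub_eq_add_neg, torusChar_add]; ring
    simp_rw [hFp, integral_const_mul, fCoeff_eq v]
    ring
  have key := hasSum_integral_of_summable_integral_norm hF hsum
  simp_rw [htsum, hterm] at key
  rw [fCoeff_eq]
  exact key.mul_left _

lemma continuous_pdF {w : Fn d} (hw : ContDiff ℝ 1 w) (j : Fin d) : Continuous (pdF j w) :=
  (hw.continuous_fderiv one_ne_zero).clm_apply continuous_const

lemma integral_box_pdF_eq_zero {w : Fn d} (hw : ContDiff ℝ 1 w) (hp : Periodic2pi w)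
    (j : Fin d) : ∫ x in box d, pdF j w x = 0 := by
  obtain ⟨m, rfl⟩ : ∃ m, d = m + 1 := Nat.exists_eq_succ_of_ne_zero j.pos.ne'
  have hdiv : ∀ x, ∑ i, (if i = j then fderiv ℝ w x else 0) (Pi.single i 1) = pdF j w x := by
    intro x
    rw [Finset.sum_eq_single j (fun i _ hi => by rw [if_neg hi, zero_apply])
      (fun h => absurd (Finset.mem_univ j) h), if_pos rfl, pdF]
  have key := integral_divergence_of_hasFDerivAt_off_countable' (0 : Vec (m + 1)) (fun _ => 2 * π)
    (fun _ => by simp only [Pi.zero_apply]; positivity)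
    (fun i x => if i = j then w x else 0) (fun i x => if i = j then fderiv ℝ w x else 0) ∅
    Set.countable_empty
    (fun i => by
      split_ifs
      exacts [hw.continuous.continuousOn, continuousOn_const])
    (fun x _ i => by
      split_ifs
      exacts [(hw.differentiable one_ne_zero x).hasFDerivAt, hasFDerivAt_const _ _])
    (by
      simp_rw [hdiv]
      exact (continuous_pdF hw j).continuousOn.integrableOn_compact isCompact_Icc)
  simp_rw [hdiv] at key
  refine ((setIntegral_congr_set Measure.univ_pi_Ioc_ae_eq_Icc).trans key).trans
    (Finset.sum_eq_zero fun i _ => ?_)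
  have hface : ∀ x, w (i.insertNth (2 * π) x) = w (i.insertNth 0 x) := fun x => by
    rw [← hp (i.insertNth 0 x) (Pi.single i 1)]
    congr 1
    ext k
    rcases Fin.eq_self_or_eq_succAbove i k with rfl | ⟨k', rfl⟩ <;> simp
  split_ifs
  · exact sub_eq_zero.mpr (congrArg (integral _) (funext hface))
  · simp only [integral_zero, sub_self]

lemma contDiff_torusChar (n : Zd d) : ContDiff ℝ 1 (torusChar n) := by
  have hphase : ContDiff ℝ 1 fun x : Vec d => ∑ i, (n i : ℝ) * x i := by fun_prop
  exact (contDiff_const.mul (Complex.ofRealCLM.contDiff.comp hphase)).cexp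

lemma periodic2pi_torusChar (n : Zd d) : Periodic2pi (torusChar n) := by
  intro x m
  rw [torusChar, torusChar, Complex.exp_eq_exp_iff_exists_int]
  refine ⟨∑ i, n i * m i, ?_⟩
  push_cast
  simp only [mul_add, Finset.sum_add_distrib, Finset.mul_sum, Finset.sum_mul]
  congr 1
  exact Finset.sum_congr rfl fun i _ => by ring

lemma pdF_torusChar (j : Fin d) (n : Zd d) (x : Vec d) :
    pdF j (torusChar n) x = Complex.I * n j * torusChar n x := by
  have hphase : HasFDerivAt (fun y : Vec d => ∑ i, (n i : ℝ) * y i)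
      (∑ i, (n i : ℝ) • ContinuousLinearMap.proj (R := ℝ) (φ := fun _ : Fin d => ℝ) i) x :=
    HasFDerivAt.fun_sum fun i _ => (hasFDerivAt_apply i x).const_mul _
  have hchar := ((Complex.ofRealCLM.hasFDerivAt.comp x hphase).const_mul Complex.I).cexp
  refine (congrArg (fun L => L (Pi.single j 1)) hchar.fderiv).trans ?_
  simp only [Function.comp_apply, map_sum, ofRealCLM_apply, ofReal_mul, ofReal_intCast, smul_apply,
    ContinuousLinearMap.comp_apply, sum_apply, ContinuousLinearMap.proj_apply, Pi.single_apply,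
    smul_eq_mul, mul_ite, mul_one, mul_zero, Finset.sum_ite_eq', Finset.mem_univ, ↓reduceIte,
    torusChar, ofReal_sum]
  ring

lemma pdF_mul {u v : Fn d} (hu : ContDiff ℝ 1 u) (hv : ContDiff ℝ 1 v) (j : Fin d) (x : Vec d) :
    pdF j (fun y => u y * v y) x = pdF j u x * v x + u x * pdF j v x := by
  simp only [pdF]
  rw [fderiv_fun_mul (hu.differentiable one_ne_zero x) (hv.differentiable one_ne_zero x)]
  simp only [add_apply, smul_apply, smul_eq_mul]
  ring

lemma fCoeff_pdF {u : Fn d} (hu : ContDiff ℝ 1 u) (hp : Periodic2pi u) (j : Fin d) (n : Zd d) :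
    fCoeff (pdF j u) n = Complex.I * (n j : ℂ) * fCoeff u n := by
  have hzero := integral_box_pdF_eq_zero (hu.mul (contDiff_torusChar (-n)))
    (fun x m => by simp only [hp x m, periodic2pi_torusChar (-n) x m]) j
  have hparts : ∀ x, pdF j (fun y => u y * torusChar (-n) y) x =
      pdF j u x * torusChar (-n) x - Complex.I * n j * (u x * torusChar (-n) x) := fun x => by
    rw [pdF_mul hu (contDiff_torusChar _), pdF_torusChar, Pi.neg_apply, Int.cast_neg]
    ring
  simp_rw [hparts] at hzero
  rw [integral_sub (integrable_mul_torusChar (continuous_pdF hu j) _)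
    ((integrable_mul_torusChar hu.continuous _).const_mul _), integral_const_mul,
    sub_eq_zero] at hzero
  rw [fCoeff_eq, fCoeff_eq, hzero]
  ring

lemma hasDerivAt_fCoeff {F F' : ℝ → Fn d} (hF : ∀ t, Continuous (F t))
    (hF' : Continuous (Function.uncurry F'))
    (hderiv : ∀ x t, HasDerivAt (fun τ => F τ x) (F' t x) t) (n : Zd d) (t : ℝ) :
    HasDerivAt (fun τ => fCoeff (F τ) n) (fCoeff (F' t) n) t := by
  simp only [fCoeff_eq]
  refine HasDerivAt.const_mul _ ?_
  obtain ⟨M, hM⟩ := ((isCompact_Icc (a := t - 1) (b := t + 1)).prod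
    (isCompact_Icc (a := (0 : Vec d)) (b := fun _ => 2 * π))).exists_bound_of_continuousOn
    hF'.continuousOn
  refine (hasDerivAt_integral_of_dominated_loc_of_deriv_le (s := Set.Icc (t - 1) (t + 1))
    (F := fun τ x => F τ x * torusChar (-n) x) (F' := fun τ x => F' τ x * torusChar (-n) x)
    (bound := fun _ => M) (Icc_mem_nhds (by linarith) (by linarith))
    (Eventually.of_forall fun τ => ((hF τ).mul (continuous_torusChar _)).aestronglyMeasurable)
    (integrable_mul_torusChar (hF t) _)
    ((hF'.comp (by fun_prop : Continuous fun x : Vec d => (t, x))).mul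
      (continuous_torusChar _)).aestronglyMeasurable ?_ ?_ ?_).2
  · refine (ae_restrict_iff' (measurableSet_box d)).mpr (Eventually.of_forall fun x hx τ hτ => ?_)
    rw [norm_mul, norm_torusChar, mul_one]
    exact hM (τ, x) ⟨hτ, box_subset_Icc d hx⟩
  · exact integrableOn_box (continuous_const (y := M))
  · exact Eventually.of_forall fun x τ _ => (hderiv x τ).mul_const _

/-! ### Frequency norms and brackets -/

lemma rnorm_eq_norm (ξ : Vec d) : rnorm ξ = ‖WithLp.toLp 2 ξ‖ := by
  rw [EuclideanSpace.norm_eq]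
  simp only [rnorm, Real.norm_eq_abs, sq_abs]

lemma rnorm_nonneg (ξ : Vec d) : 0 ≤ rnorm ξ := Real.sqrt_nonneg _

lemma continuous_rnorm : Continuous (rnorm : Vec d → ℝ) := by
  unfold rnorm
  fun_prop

lemma rnorm_add_le (ξ η : Vec d) : rnorm (ξ + η) ≤ rnorm ξ + rnorm η := by
  simp only [rnorm_eq_norm, WithLp.toLp_add]
  exact norm_add_le _ _

lemma rnorm_smul (t : ℝ) (ξ : Vec d) : rnorm (t • ξ) = |t| * rnorm ξ := by
  simp only [rnorm_eq_norm, WithLp.toLp_smul, norm_smul, Real.norm_eq_abs]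

lemma rnorm_neg (ξ : Vec d) : rnorm (-ξ) = rnorm ξ := by
  simp only [rnorm_eq_norm, WithLp.toLp_neg, norm_neg]

lemma abs_apply_le_rnorm (ξ : Vec d) (i : Fin d) : |ξ i| ≤ rnorm ξ :=
  Real.abs_le_sqrt (Finset.single_le_sum (f := fun i => ξ i ^ 2) (fun _ _ => sq_nonneg _)
    (Finset.mem_univ i))

lemma jbR_sq (ξ : Vec d) : jbR ξ ^ 2 = 1 + rnorm ξ ^ 2 := by
  have hsum : 0 ≤ ∑ i, ξ i ^ 2 := Finset.sum_nonneg fun _ _ => sq_nonneg _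
  rw [jbR, rnorm, Real.sq_sqrt (by linarith), Real.sq_sqrt hsum]

lemma one_le_jbR (ξ : Vec d) : 1 ≤ jbR ξ :=
  Real.one_le_sqrt.mpr (le_add_of_nonneg_right (Finset.sum_nonneg fun _ _ => sq_nonneg _))

lemma jbR_pos (ξ : Vec d) : 0 < jbR ξ := one_pos.trans_le (one_le_jbR ξ)

lemma jbR_rpow_pos (ξ : Vec d) (m : ℝ) : 0 < jbR ξ ^ m := Real.rpow_pos_of_pos (jbR_pos ξ) m

lemma rnorm_le_jbR (ξ : Vec d) : rnorm ξ ≤ jbR ξ :=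
  Real.sqrt_le_sqrt (by linarith)

lemma jbR_eq_rnorm_cons (ξ : Vec d) : jbR ξ = rnorm (Fin.cons 1 ξ : Vec (d + 1)) := by
  simp only [jbR, rnorm, Fin.sum_univ_succ, Fin.cons_zero, Fin.cons_succ, one_pow]

lemma rnorm_cons_zero (ξ : Vec d) : rnorm (Fin.cons 0 ξ : Vec (d + 1)) = rnorm ξ := by
  simp only [rnorm, Fin.sum_univ_succ, Fin.cons_zero, Fin.cons_succ, ne_eq, OfNat.ofNat_ne_zero,
    not_false_eq_true, zero_pow, zero_add]

lemma jbR_add_le (ξ η : Vec d) : jbR (ξ + η) ≤ jbR ξ + rnorm η := by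
  have hcons : (Fin.cons 1 (ξ + η) : Vec (d + 1)) = Fin.cons 1 ξ + Fin.cons 0 η := by
    ext i
    cases i using Fin.cases <;> simp
  rw [jbR_eq_rnorm_cons, jbR_eq_rnorm_cons, hcons, ← rnorm_cons_zero η]
  exact rnorm_add_le _ _

lemma jbR_le_add_rnorm_sub (ξ η : Vec d) : jbR ξ ≤ jbR η + rnorm (ξ - η) := by
  simpa only [add_sub_cancel] using jbR_add_le η (ξ - η)

lemma jbR_le_one_add_rnorm (ξ : Vec d) : jbR ξ ≤ 1 + rnorm ξ := by
  have hzero : jbR (0 : Vec d) = 1 := by simp [jbR]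
  simpa only [zero_add, hzero] using jbR_add_le 0 ξ

/-- The inclusion of the frequency lattice `ℤ^d` in `ℝ^d`. -/
def intVec (n : Zd d) : Vec d := fun i => (n i : ℝ)

lemma jb_eq_jbR (n : Zd d) : jb n = jbR (intVec n) := rfl

lemma znorm_eq_rnorm (n : Zd d) : znorm n = rnorm (intVec n) := rfl

lemma one_le_jb (n : Zd d) : 1 ≤ jb n := one_le_jbR (intVec n)

lemma jb_pos (n : Zd d) : 0 < jb n := jbR_pos (intVec n)

lemma jb_le_one_add_sum (n : Zd d) : jb n ≤ 1 + ∑ i, |(n i : ℝ)| := by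
  refine (jbR_le_one_add_rnorm (intVec n)).trans (add_le_add_right ?_ 1)
  refine (Real.sqrt_le_left (Finset.sum_nonneg fun _ _ => abs_nonneg _)).mpr ?_
  simpa only [intVec, sq_abs] using Finset.sum_sq_le_sq_sum_of_nonneg (s := Finset.univ)
    (f := fun i => |(n i : ℝ)|) fun _ _ => abs_nonneg _

lemma mid_sub_left (j k : Zd d) : mid j k - intVec j = -((1 / 2 : ℝ) • intVec (j - k)) := by
  ext i
  simp only [mid, intVec, Pi.sub_apply, Pi.neg_apply, Pi.smul_apply, smul_eq_mul, Int.cast_add,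
    Int.cast_sub]
  ring

lemma mid_sub_right (j k : Zd d) : mid j k - intVec k = (1 / 2 : ℝ) • intVec (j - k) := by
  ext i
  simp only [mid, intVec, Pi.sub_apply, Pi.smul_apply, smul_eq_mul, Int.cast_add, Int.cast_sub]
  ring

lemma intVec_add_eq_two_smul_mid (j k : Zd d) : intVec (j + k) = (2 : ℝ) • mid j k := by
  ext i
  simp only [mid, intVec, Pi.add_apply, Pi.smul_apply, smul_eq_mul, Int.cast_add]
  ring

lemma jb_add_le_two_mul_jbR_mid (j k : Zd d) : jb (j + k) ≤ 2 * jbR (mid j k) := by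
  refine (sq_le_sq₀ (jb_pos _).le (by linarith [jbR_pos (mid j k)])).mp ?_
  rw [jb_eq_jbR, intVec_add_eq_two_smul_mid, mul_pow, jbR_sq, jbR_sq, rnorm_smul, mul_pow, sq_abs]
  linarith

lemma jbR_mid_le_jb_add (j k : Zd d) : jbR (mid j k) ≤ jb (j + k) := by
  refine (sq_le_sq₀ (jbR_pos _).le (jb_pos _).le).mp ?_
  rw [jb_eq_jbR, intVec_add_eq_two_smul_mid, jbR_sq, jbR_sq, rnorm_smul, mul_pow, sq_abs]
  linarith [sq_nonneg (rnorm (mid j k))]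

/-- Two reals are comparable with constant `K` when each is at most `K` times the other. -/
def Comparable (K x y : ℝ) : Prop := x ≤ K * y ∧ y ≤ K * x

lemma Comparable.symm {K x y : ℝ} (h : Comparable K x y) : Comparable K y x := ⟨h.2, h.1⟩

lemma Comparable.trans {K L x y z : ℝ} (hK : 0 ≤ K) (hL : 0 ≤ L) (h : Comparable K x y)
    (h' : Comparable L y z) : Comparable (K * L) x z := by
  constructor
  · rw [mul_assoc]
    exact h.1.trans (mul_le_mul_of_nonneg_left h'.1 hK)
  · rw [mul_comm K, mul_assoc]
    exact h'.2.trans (mul_le_mul_of_nonneg_left h.2 hL)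

lemma Comparable.mono {K L x y : ℝ} (hx : 0 ≤ x) (hy : 0 ≤ y) (h : Comparable K x y)
    (hKL : K ≤ L) : Comparable L x y :=
  ⟨h.1.trans (mul_le_mul_of_nonneg_right hKL hy), h.2.trans (mul_le_mul_of_nonneg_right hKL hx)⟩

lemma Comparable.rpow_le {K x y : ℝ} (hK : 0 < K) (hx : 0 < x) (hy : 0 < y)
    (h : Comparable K x y) (m : ℝ) : x ^ m ≤ K ^ |m| * y ^ m := by
  rcases le_total 0 m with hm | hm
  · rw [abs_of_nonneg hm, ← Real.mul_rpow hK.le hy.le]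
    exact Real.rpow_le_rpow hx.le h.1 hm
  · rw [abs_of_nonpos hm, Real.rpow_neg hK.le, ← Real.inv_rpow hK.le,
      ← Real.mul_rpow (inv_nonneg.mpr hK.le) hy.le]
    exact Real.rpow_le_rpow_of_nonpos (by positivity) ((inv_mul_le_iff₀ hK).mpr h.2) hm

lemma comparable_jbR_of_near {ξ η : Vec d} (h : rnorm (ξ - η) ≤ 1 / 2 * jbR η) :
    Comparable 2 (jbR ξ) (jbR η) := by
  have hξη := jbR_le_add_rnorm_sub ξ η
  have hηξ := jbR_le_add_rnorm_sub η ξ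
  rw [← rnorm_neg, neg_sub] at hηξ
  constructor <;> linarith [jbR_pos η]

/-! ### Symbol estimates -/

/-- Quantitative membership in the symbol class `𝒩^m_s`: all derivatives of order at most `s`
satisfy the symbol estimates of order `m` with the constant `M`. -/
structure SymBound (m : ℝ) (s : ℕ) (M : ℝ) (a : Sym d) : Prop where
  contDiff : ContDiff ℝ (s : ℕ∞) (Function.uncurry a)
  periodic : ∀ ξ, Periodic2pi fun x => a x ξ
  norm_mderiv_le : ∀ (L : List (Fin d ⊕ Fin d)) (x ξ : Vec d), L.length ≤ s →
    ‖mderiv L a x ξ‖ ≤ M * jbR ξ ^ (m - (nXi L : ℝ))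

/-- The direction in the phase space `ℝ^d × ℝ^d` along which `mderiv [i]` differentiates. -/
def derivDir (i : Fin d ⊕ Fin d) : Vec d × Vec d :=
  Sum.elim (fun j => (Pi.single j 1, 0)) (fun j => (0, Pi.single j 1)) i

lemma mderiv_append (L L' : List (Fin d ⊕ Fin d)) (a : Sym d) :
    mderiv (L ++ L') a = mderiv L (mderiv L' a) :=
  List.foldr_append ..

lemma nXi_append (L L' : List (Fin d ⊕ Fin d)) : nXi (L ++ L') = nXi L + nXi L' := by
  simp only [nXi, List.filter_append, List.length_append]

lemma nXi_nil : nXi ([] : List (Fin d ⊕ Fin d)) = 0 := rfl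

lemma nXi_inl (j : Fin d) : nXi [Sum.inl j] = 0 := rfl

lemma nXi_inr (j : Fin d) : nXi [Sum.inr j] = 1 := rfl

lemma mderiv_singleton {a : Sym d} (ha : ContDiff ℝ 1 (Function.uncurry a)) (i : Fin d ⊕ Fin d)
    (x ξ : Vec d) :
    mderiv [i] a x ξ = fderiv ℝ (Function.uncurry a) (x, ξ) (derivDir i) := by
  have hdiff := (ha.differentiable one_ne_zero (x, ξ)).hasFDerivAt
  rcases i with j | j
  · have hx := hdiff.comp (f := fun y => (y, ξ)) x (hasFDerivAt_prodMk_left x ξ)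
    exact congrArg (fun L => L (Pi.single j 1)) hx.fderiv
  · have hξ := hdiff.comp (f := fun η => (x, η)) ξ (hasFDerivAt_prodMk_right x ξ)
    exact congrArg (fun L => L (Pi.single j 1)) hξ.fderiv

lemma contDiff_mderiv_singleton {a : Sym d} {s : ℕ}
    (ha : ContDiff ℝ ((s + 1 : ℕ) : ℕ∞) (Function.uncurry a)) (i : Fin d ⊕ Fin d) :
    ContDiff ℝ (s : ℕ∞) (Function.uncurry (mderiv [i] a)) := by
  have ha₁ : ContDiff ℝ 1 (Function.uncurry a) :=
    ha.of_le (by exact_mod_cast Nat.le_add_left 1 s)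
  have heq : Function.uncurry (mderiv [i] a) =
      fun p => fderiv ℝ (Function.uncurry a) p (derivDir i) :=
    funext fun p => mderiv_singleton ha₁ i p.1 p.2
  rw [heq]
  exact (ha.fderiv_right (m := (s : ℕ∞)) (by norm_cast)).clm_apply contDiff_const

lemma periodic2pi_mderiv_singleton {a : Sym d} (ha : ContDiff ℝ 1 (Function.uncurry a))
    (hp : ∀ ξ, Periodic2pi fun x => a x ξ) (i : Fin d ⊕ Fin d) (ξ : Vec d) :
    Periodic2pi fun x => mderiv [i] a x ξ := by
  intro x n
  let τ : Vec d × Vec d := (fun i => 2 * π * (n i : ℝ), 0)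
  have hshift : Function.uncurry a = fun p => Function.uncurry a (p + τ) := by
    ext ⟨y, η⟩
    simp only [τ, Prod.mk_add_mk, add_zero, Function.uncurry_apply_pair]
    exact (hp η y n).symm
  have hfderiv : fderiv ℝ (Function.uncurry a) (x, ξ) =
      fderiv ℝ (Function.uncurry a) ((x, ξ) + τ) := by
    conv_lhs => rw [hshift]
    exact fderiv_comp_add_right τ
  simp only [mderiv_singleton ha, hfderiv, τ, Prod.mk_add_mk, add_zero]
  rfl

lemma mderiv_singleton_add {a b : Sym d} (ha : ContDiff ℝ 1 (Function.uncurry a))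
    (hb : ContDiff ℝ 1 (Function.uncurry b)) (i : Fin d ⊕ Fin d) :
    mderiv [i] (fun x ξ => a x ξ + b x ξ) = fun x ξ => mderiv [i] a x ξ + mderiv [i] b x ξ := by
  ext x ξ
  rw [mderiv_singleton (ha.add hb), mderiv_singleton ha, mderiv_singleton hb]
  exact congrArg (fun L => L (derivDir i))
    (fderiv_add (ha.differentiable one_ne_zero _) (hb.differentiable one_ne_zero _))

lemma mderiv_singleton_mul {a b : Sym d} (ha : ContDiff ℝ 1 (Function.uncurry a))
    (hb : ContDiff ℝ 1 (Function.uncurry b)) (i : Fin d ⊕ Fin d) :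
    mderiv [i] (fun x ξ => a x ξ * b x ξ) =
      fun x ξ => a x ξ * mderiv [i] b x ξ + mderiv [i] a x ξ * b x ξ := by
  ext x ξ
  rw [mderiv_singleton (ha.mul hb), mderiv_singleton ha, mderiv_singleton hb]
  refine (congrArg (fun L => L (derivDir i)) (fderiv_mul (ha.differentiable one_ne_zero _)
    (hb.differentiable one_ne_zero _))).trans ?_
  simp only [add_apply, smul_apply, smul_eq_mul, Function.uncurry_apply_pair]
  ring

lemma mderiv_singleton_const_mul (c : ℂ) {a : Sym d} (ha : ContDiff ℝ 1 (Function.uncurry a))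
    (i : Fin d ⊕ Fin d) :
    mderiv [i] (fun x ξ => c * a x ξ) = fun x ξ => c * mderiv [i] a x ξ := by
  ext x ξ
  rw [mderiv_singleton (contDiff_const.mul ha), mderiv_singleton ha]
  exact congrArg (fun L => L (derivDir i))
    (fderiv_const_mul (ha.differentiable one_ne_zero (x, ξ)) c)

lemma SymBound.mono {m M : ℝ} {r s : ℕ} {a : Sym d} (h : SymBound m s M a) (hr : r ≤ s) :
    SymBound m r M a :=
  ⟨h.contDiff.of_le (by exact_mod_cast hr), h.periodic,
    fun L x ξ hL => h.norm_mderiv_le L x ξ (hL.trans hr)⟩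

lemma SymBound.mono_const {m M N : ℝ} {s : ℕ} {a : Sym d} (h : SymBound m s M a) (hMN : M ≤ N) :
    SymBound m s N a :=
  ⟨h.contDiff, h.periodic, fun L x ξ hL => (h.norm_mderiv_le L x ξ hL).trans
    (mul_le_mul_of_nonneg_right hMN (jbR_rpow_pos ξ _).le)⟩

lemma SymBound.norm_le {m M : ℝ} {s : ℕ} {a : Sym d} (h : SymBound m s M a) (x ξ : Vec d) :
    ‖a x ξ‖ ≤ M * jbR ξ ^ m := by
  have hnil := h.norm_mderiv_le [] x ξ s.zero_le
  rwa [nXi_nil, Nat.cast_zero, sub_zero] at hnil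

lemma SymBound.nonneg {m M : ℝ} {s : ℕ} {a : Sym d} (h : SymBound m s M a) : 0 ≤ M :=
  nonneg_of_mul_nonneg_left ((norm_nonneg _).trans (h.norm_le 0 0)) (jbR_rpow_pos 0 m)

lemma SymBound.contDiff_one {m M : ℝ} {s : ℕ} {a : Sym d} (h : SymBound m s M a) (hs : 1 ≤ s) :
    ContDiff ℝ 1 (Function.uncurry a) :=
  h.contDiff.of_le (by exact_mod_cast hs)

lemma SymBound.continuous_left {m M : ℝ} {s : ℕ} {a : Sym d} (h : SymBound m s M a) (ξ : Vec d) :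
    Continuous fun x => a x ξ :=
  h.contDiff.continuous.comp (f := fun x => (x, ξ)) (by fun_prop)

lemma SymBound.deriv {m M : ℝ} {s : ℕ} {a : Sym d} (h : SymBound m (s + 1) M a)
    (i : Fin d ⊕ Fin d) : SymBound (m - nXi [i]) s M (mderiv [i] a) where
  contDiff := contDiff_mderiv_singleton h.contDiff i
  periodic := periodic2pi_mderiv_singleton (h.contDiff_one (Nat.le_add_left 1 s)) h.periodic i
  norm_mderiv_le L x ξ hL := by
    have hbound := h.norm_mderiv_le (L ++ [i]) x ξ (by simpa using hL)
    rwa [mderiv_append, nXi_append, Nat.cast_add, ← sub_sub, sub_right_comm] at hbound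

lemma SymBound.pdx {m M : ℝ} {s : ℕ} {a : Sym d} (h : SymBound m (s + 1) M a) (j : Fin d) :
    SymBound m s M (pdx j a) := by
  have hj := h.deriv (Sum.inl j)
  rwa [nXi_inl, Nat.cast_zero, sub_zero] at hj

lemma SymBound.pdxi {m M : ℝ} {s : ℕ} {a : Sym d} (h : SymBound m (s + 1) M a) (j : Fin d) :
    SymBound (m - 1) s M (pdxi j a) := by
  have hj := h.deriv (Sum.inr j)
  rwa [nXi_inr, Nat.cast_one] at hj

lemma SymBound.of_derivatives {m M : ℝ} {s : ℕ} {a : Sym d}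
    (hsmooth : ContDiff ℝ (s : ℕ∞) (Function.uncurry a))
    (hperiodic : ∀ ξ, Periodic2pi fun x => a x ξ)
    (hbound : ∀ x ξ, ‖a x ξ‖ ≤ M * jbR ξ ^ m)
    (hderiv : ∀ r < s, ∀ i, SymBound (m - nXi [i]) r M (mderiv [i] a)) : SymBound m s M a where
  contDiff := hsmooth
  periodic := hperiodic
  norm_mderiv_le L x ξ hL := by
    rcases List.eq_nil_or_concat' L with rfl | ⟨L, i, rfl⟩
    · rw [nXi_nil, Nat.cast_zero, sub_zero]
      exact hbound x ξ
    · rw [List.length_append, List.length_singleton] at hL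
      have hLi := (hderiv L.length hL i).norm_mderiv_le L x ξ le_rfl
      rwa [mderiv_append, nXi_append, Nat.cast_add, ← sub_sub, sub_right_comm]

lemma SymBound.zero {M : ℝ} (hM : 0 ≤ M) (m : ℝ) (s : ℕ) :
    SymBound (d := d) m s M (fun _ _ => 0) := by
  induction s using Nat.strong_induction_on generalizing m with
  | _ s ih =>
    refine .of_derivatives contDiff_const (fun _ _ _ => rfl) (fun x ξ => ?_) (fun r hr i => ?_)
    · simpa only [norm_zero] using mul_nonneg hM (jbR_rpow_pos ξ m).le
    · have hzero : mderiv [i] (fun _ _ => 0) = fun (_ : Vec d) (_ : Vec d) => (0 : ℂ) := by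
        ext x ξ
        rw [mderiv_singleton contDiff_const]
        exact congrArg (fun L : Vec d × Vec d →L[ℝ] ℂ => L (derivDir i)) (fderiv_const_apply 0)
      rw [hzero]
      exact ih r hr _

lemma SymBound.const_mul {m M : ℝ} {s : ℕ} {a : Sym d} (c : ℂ) (h : SymBound m s M a) :
    SymBound m s (‖c‖ * M) (fun x ξ => c * a x ξ) := by
  induction s using Nat.strong_induction_on generalizing m a with
  | _ s ih =>
    refine .of_derivatives (contDiff_const.mul h.contDiff)
      (fun ξ x n => congrArg (c * ·) (h.periodic ξ x n)) (fun x ξ => ?_) (fun r hr i => ?_)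
    · rw [norm_mul, mul_assoc]
      exact mul_le_mul_of_nonneg_left (h.norm_le x ξ) (norm_nonneg c)
    · rw [mderiv_singleton_const_mul c (h.contDiff_one (r.zero_lt_succ.trans_le hr))]
      exact ih r hr ((h.mono hr).deriv i)

lemma SymBound.add {m M N : ℝ} {s : ℕ} {a b : Sym d} (ha : SymBound m s M a)
    (hb : SymBound m s N b) : SymBound m s (M + N) (fun x ξ => a x ξ + b x ξ) := by
  induction s using Nat.strong_induction_on generalizing m a b with
  | _ s ih =>
    refine .of_derivatives (ha.contDiff.add hb.contDiff)
      (fun ξ x n => congrArg₂ (· + ·) (ha.periodic ξ x n) (hb.periodic ξ x n))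
      (fun x ξ => ?_) (fun r hr i => ?_)
    · rw [add_mul]
      exact norm_add_le_of_le (ha.norm_le x ξ) (hb.norm_le x ξ)
    · have hs : 1 ≤ s := r.zero_lt_succ.trans_le hr
      rw [mderiv_singleton_add (ha.contDiff_one hs) (hb.contDiff_one hs)]
      exact ih r hr ((ha.mono hr).deriv i) ((hb.mono hr).deriv i)

lemma SymBound.mul {m n M N : ℝ} {s : ℕ} {a b : Sym d} (ha : SymBound m s M a)
    (hb : SymBound n s N b) :
    SymBound (m + n) s (2 ^ s * (M * N)) (fun x ξ => a x ξ * b x ξ) := by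
  induction s using Nat.strong_induction_on generalizing m n a b with
  | _ s ih =>
    have hMN : 0 ≤ M * N := mul_nonneg ha.nonneg hb.nonneg
    refine .of_derivatives (ha.contDiff.mul hb.contDiff)
      (fun ξ x k => congrArg₂ (· * ·) (ha.periodic ξ x k) (hb.periodic ξ x k))
      (fun x ξ => ?_) (fun r hr i => ?_)
    · calc ‖a x ξ * b x ξ‖ ≤ (M * jbR ξ ^ m) * (N * jbR ξ ^ n) :=
            norm_mul_le_of_le (ha.norm_le x ξ) (hb.norm_le x ξ)
        _ = M * N * jbR ξ ^ (m + n) := by rw [Real.rpow_add (jbR_pos ξ)]; ring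
        _ ≤ 2 ^ s * (M * N) * jbR ξ ^ (m + n) := mul_le_mul_of_nonneg_right
            (le_mul_of_one_le_left hMN (one_le_pow₀ one_le_two)) (jbR_rpow_pos ξ _).le
    · have hs : 1 ≤ s := r.zero_lt_succ.trans_le hr
      have hleft := ih r hr (ha.mono hr.le) ((hb.mono hr).deriv i)
      have hright := ih r hr ((ha.mono hr).deriv i) (hb.mono hr.le)
      rw [mderiv_singleton_mul (ha.contDiff_one hs) (hb.contDiff_one hs)]
      rw [← add_sub_assoc] at hleft
      rw [sub_add_eq_add_sub] at hright
      refine (hleft.add hright).mono_const ?_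
      calc 2 ^ r * (M * N) + 2 ^ r * (M * N) = 2 ^ (r + 1) * (M * N) := by ring
        _ ≤ 2 ^ s * (M * N) :=
            mul_le_mul_of_nonneg_right (pow_le_pow_right₀ one_le_two hr) hMN

lemma InSymClass.symBound {m : ℝ} {s : ℕ} {a : Sym d} (h : InSymClass m s a) :
    SymBound m s (symNorm m s a) a where
  contDiff := h.1
  periodic := h.2.1
  norm_mderiv_le L x ξ hL := by
    have hle : jbR ξ ^ (-m + (nXi L : ℝ)) * ‖mderiv L a x ξ‖ ≤ symNorm m s a :=
      le_csSup h.2.2 ⟨L, x, ξ, hL, rfl⟩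
    rwa [show m - (nXi L : ℝ) = -(-m + (nXi L : ℝ)) by ring, Real.rpow_neg (jbR_pos ξ).le,
      ← div_eq_mul_inv, le_div_iff₀' (jbR_rpow_pos ξ _)]

/-! ### High-frequency cutoffs -/

lemma SymBound.of_pdF {m M : ℝ} {s : ℕ} {f : Vec d → ℂ} (hf : ContDiff ℝ (s : ℕ∞) f)
    (hbound : ∀ ξ, ‖f ξ‖ ≤ M * jbR ξ ^ m)
    (hderiv : ∀ r < s, ∀ i, SymBound (m - 1) r M fun _ => pdF i f) :
    SymBound m s M fun _ => f := by
  have hM : 0 ≤ M := nonneg_of_mul_nonneg_left ((norm_nonneg _).trans (hbound 0))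
    (jbR_rpow_pos 0 m)
  refine .of_derivatives (hf.comp contDiff_snd) (fun _ _ _ => rfl) (fun _ => hbound)
    fun r hr i => ?_
  rcases i with j | j
  · have hzero : mderiv [Sum.inl j] (fun _ => f) = fun _ _ => 0 := by
      ext x ξ
      exact congrArg (fun L : Vec d →L[ℝ] ℂ => L (Pi.single j 1)) (fderiv_const_apply (f ξ))
    rw [hzero]
    exact .zero hM _ r
  · rw [nXi_inr, Nat.cast_one]
    exact hderiv r hr j

lemma pdF_comp_smul (h : Vec d → ℂ) (r : ℝ) (i : Fin d) :
    pdF i (fun ξ => h (r • ξ)) = fun ξ => (r : ℂ) * pdF i h (r • ξ) := by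
  ext ξ
  rw [pdF, fderiv_comp_smul]
  exact Complex.real_smul

lemma contDiff_pdF {h : Vec d → ℂ} (hh : ContDiff ℝ (⊤ : ℕ∞) h) (i : Fin d) :
    ContDiff ℝ (⊤ : ℕ∞) (pdF i h) :=
  (hh.fderiv_right (m := (⊤ : ℕ∞)) le_rfl).clm_apply contDiff_const

lemma exists_norm_dilation_le {h : Vec d → ℂ} (hh : Continuous h) (hs : HasCompactSupport h)
    {R₀ : ℝ} (hR₀ : 0 < R₀) {ν : ℝ} (hν : 0 ≤ ν) :
    ∃ K, 0 ≤ K ∧ ∀ R ≥ R₀, ∀ ξ, ‖h (R⁻¹ • ξ)‖ ≤ K * R ^ ν * jbR ξ ^ (-ν) := by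
  have hpos (η : Vec d) : 0 < R₀⁻¹ + rnorm η :=
    add_pos_of_pos_of_nonneg (inv_pos.mpr hR₀) (rnorm_nonneg η)
  obtain ⟨K, hK⟩ : ∃ K, ∀ η, ‖((R₀⁻¹ + rnorm η) ^ ν : ℝ) • h η‖ ≤ K :=
    (((continuous_const.add continuous_rnorm).rpow_const fun _ => Or.inr hν).smul
      hh).bounded_above_of_compact_support hs.smul_left
  refine ⟨K, (norm_nonneg _).trans (hK 0), fun R hR ξ => ?_⟩
  have hR₁ : 0 < R := hR₀.trans_le hR
  have hjb : jbR ξ ≤ R * (R₀⁻¹ + rnorm (R⁻¹ • ξ)) := by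
    have hone : 1 ≤ R * R₀⁻¹ := by rwa [← div_eq_mul_inv, one_le_div₀ hR₀]
    rw [rnorm_smul, abs_of_pos (inv_pos.mpr hR₁), mul_add, mul_inv_cancel_left₀ hR₁.ne']
    exact (jbR_le_one_add_rnorm ξ).trans (add_le_add_left hone _)
  have hrpow : jbR ξ ^ ν ≤ R ^ ν * (R₀⁻¹ + rnorm (R⁻¹ • ξ)) ^ ν := by
    rw [← Real.mul_rpow hR₁.le (hpos _).le]
    exact Real.rpow_le_rpow (jbR_pos ξ).le hjb hν
  have hnorm := hK (R⁻¹ • ξ)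
  rw [norm_smul, Real.norm_of_nonneg (Real.rpow_nonneg (hpos _).le ν)] at hnorm
  rw [Real.rpow_neg (jbR_pos ξ).le, ← div_eq_mul_inv, le_div_iff₀ (jbR_rpow_pos ξ ν)]
  calc ‖h (R⁻¹ • ξ)‖ * jbR ξ ^ ν
      ≤ ‖h (R⁻¹ • ξ)‖ * (R ^ ν * (R₀⁻¹ + rnorm (R⁻¹ • ξ)) ^ ν) :=
        mul_le_mul_of_nonneg_left hrpow (norm_nonneg _)
    _ = (R₀⁻¹ + rnorm (R⁻¹ • ξ)) ^ ν * ‖h (R⁻¹ • ξ)‖ * R ^ ν := by ring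
    _ ≤ K * R ^ ν := mul_le_mul_of_nonneg_right hnorm (Real.rpow_nonneg hR₁.le ν)

lemma exists_symBound_dilation {R₀ : ℝ} (hR₀ : 0 < R₀) (s : ℕ) {h : Vec d → ℂ}
    (hh : ContDiff ℝ (⊤ : ℕ∞) h) (hs : HasCompactSupport h) {ν : ℝ} (hν : 0 ≤ ν) :
    ∃ K, 0 ≤ K ∧ ∀ R ≥ R₀, SymBound (-ν) s (K * R ^ ν) fun _ ξ => h (R⁻¹ • ξ) := by
  induction s generalizing h ν with
  | zero =>
    obtain ⟨K, hK₀, hK⟩ := exists_norm_dilation_le hh.continuous hs hR₀ hν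
    exact ⟨K, hK₀, fun R hR => .of_pdF ((hh.of_le (by simp)).comp (contDiff_const_smul R⁻¹))
      (hK R hR) fun r hr => absurd hr r.not_lt_zero⟩
  | succ s ih =>
    obtain ⟨K, hK₀, hK⟩ := exists_norm_dilation_le hh.continuous hs hR₀ hν
    choose L hL₀ hL using fun i => ih (contDiff_pdF hh i)
      (hs.fderiv_apply (𝕜 := ℝ) (Pi.single i 1)) (add_nonneg hν zero_le_one)
    have hsum : 0 ≤ ∑ i, L i := Finset.sum_nonneg fun i _ => hL₀ i
    refine ⟨K + ∑ i, L i, add_nonneg hK₀ hsum, fun R hR => ?_⟩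
    have hR₁ : 0 < R := hR₀.trans_le hR
    refine .of_pdF ((hh.of_le (by exact_mod_cast le_top)).comp (contDiff_const_smul R⁻¹))
      (fun ξ => (hK R hR ξ).trans ?_) fun r hr i => ?_
    · gcongr
      · exact (jbR_rpow_pos ξ _).le
      · exact le_add_of_nonneg_right hsum
    · rw [pdF_comp_smul, ← neg_add']
      refine (((hL i R hR).mono (Nat.le_of_lt_succ hr)).const_mul _).mono_const ?_
      rw [Complex.norm_real, Real.norm_of_nonneg (inv_nonneg.mpr hR₁.le),
        Real.rpow_add_one hR₁.ne']
      calc R⁻¹ * (L i * (R ^ ν * R)) = L i * R ^ ν := by field_simp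
        _ ≤ (K + ∑ i, L i) * R ^ ν := by
            gcongr
            linarith [Finset.single_le_sum (fun i _ => hL₀ i) (Finset.mem_univ i)]

lemma contDiff_cutoff_rnorm {χ : ℝ → ℝ} (hχ : IsCutoff χ) :
    ContDiff ℝ (⊤ : ℕ∞) fun ξ : Vec d => ((χ (rnorm ξ) : ℝ) : ℂ) := by
  refine Complex.ofRealCLM.contDiff.comp (contDiff_iff_contDiffAt.mpr fun ξ => ?_)
  by_cases hξ : ∑ i, ξ i ^ 2 = 0
  · have hone : (fun η : Vec d => χ (rnorm η)) =ᶠ[nhds ξ] fun _ => 1 := by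
      have hlt : rnorm ξ < 5 / 4 := by rw [rnorm, hξ, Real.sqrt_zero]; norm_num
      filter_upwards [(isOpen_lt continuous_rnorm continuous_const).mem_nhds hlt] with η hη
      exact hχ.eq_one _ ((abs_of_nonneg (rnorm_nonneg η)).trans_le hη.le)
    exact contDiffAt_const.congr_of_eventuallyEq hone
  · refine hχ.smooth.contDiffAt.comp ξ (ContDiffAt.sqrt ?_ hξ)
    exact (ContDiff.sum fun i _ => (contDiff_apply ℝ ℝ i).pow 2).contDiffAt

lemma hasCompactSupport_cutoff_rnorm {χ : ℝ → ℝ} (hχ : IsCutoff χ) :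
    HasCompactSupport fun ξ : Vec d => ((χ (rnorm ξ) : ℝ) : ℂ) := by
  refine .intro (isCompact_Icc (a := fun _ => -(8 / 5)) (b := fun _ => 8 / 5)) fun ξ hξ => ?_
  rw [hχ.eq_zero, Complex.ofReal_zero]
  contrapose! hξ
  have hcoord (i : Fin d) := (abs_apply_le_rnorm ξ i).trans ((le_abs_self _).trans hξ.le)
  exact ⟨fun i => (abs_le.mp (hcoord i)).1, fun i => (abs_le.mp (hcoord i)).2⟩

lemma cutXR_eq_zero {χ : ℝ → ℝ} (hχ : IsCutoff χ) {R : ℝ} (hR : 0 < R) {ξ : Vec d}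
    (hξ : rnorm ξ ≤ 5 / 4 * R) : cutXR χ R ξ = 0 := by
  rw [cutXR, hχ.eq_one, sub_self]
  rwa [abs_of_nonneg (div_nonneg (rnorm_nonneg ξ) hR.le), div_le_iff₀ hR]

lemma norm_cutXR_le {χ : ℝ → ℝ} (hχ : IsCutoff χ) {R : ℝ} (hR : 0 < R) {θ : ℝ} (hθ : 0 ≤ θ)
    (ξ : Vec d) : ‖((cutXR χ R ξ : ℝ) : ℂ)‖ ≤ R ^ (-θ) * jbR ξ ^ θ := by
  rw [Complex.norm_real]
  rcases le_or_gt (rnorm ξ) (5 / 4 * R) with hξ | hξ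
  · rw [cutXR_eq_zero hχ hR hξ, norm_zero]
    exact mul_nonneg (Real.rpow_nonneg hR.le _) (jbR_rpow_pos ξ θ).le
  · have hle : ‖cutXR χ R ξ‖ ≤ 1 := by
      obtain ⟨hχ₀, hχ₁⟩ := hχ.mem (rnorm ξ / R)
      rw [cutXR, Real.norm_eq_abs, abs_le]
      constructor <;> linarith
    refine hle.trans ?_
    rw [Real.rpow_neg hR.le, ← div_eq_inv_mul, ← Real.div_rpow (jbR_pos ξ).le hR.le]
    refine Real.one_le_rpow ((one_le_div₀ hR).mpr ?_) hθ
    linarith [rnorm_le_jbR ξ]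

lemma ofReal_cutXR {χ : ℝ → ℝ} {R : ℝ} (hR : 0 < R) (ξ : Vec d) :
    ((cutXR χ R ξ : ℝ) : ℂ) = 1 - ((χ (rnorm (R⁻¹ • ξ)) : ℝ) : ℂ) := by
  rw [cutXR, rnorm_smul, abs_of_pos (inv_pos.mpr hR), ← div_eq_inv_mul, Complex.ofReal_sub,
    Complex.ofReal_one]

lemma pdF_cutXR {χ : ℝ → ℝ} {R : ℝ} (hR : 0 < R) (i : Fin d) :
    pdF i (fun ξ => ((cutXR χ R ξ : ℝ) : ℂ)) =
      fun ξ => -((R⁻¹ : ℝ) : ℂ) * pdF i (fun η => ((χ (rnorm η) : ℝ) : ℂ)) (R⁻¹ • ξ) := by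
  have hneg : pdF i (fun ξ => ((cutXR χ R ξ : ℝ) : ℂ)) =
      fun ξ => -pdF i (fun η => ((χ (rnorm (R⁻¹ • η)) : ℝ) : ℂ)) ξ := by
    ext ξ
    simp only [pdF, ofReal_cutXR hR, fderiv_const_sub, neg_apply]
  rw [hneg, pdF_comp_smul (fun η => ((χ (rnorm η) : ℝ) : ℂ))]
  simp only [neg_mul]

lemma exists_symBound_cutXR {χ : ℝ → ℝ} (hχ : IsCutoff χ) {R₀ : ℝ} (hR₀ : 0 < R₀) {θ : ℝ}
    (hθ₀ : 0 ≤ θ) (hθ₁ : θ ≤ 1) (s : ℕ) :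
    ∃ K > 0, ∀ R ≥ R₀,
      SymBound (d := d) θ s (K * R ^ (-θ)) fun _ ξ => ((cutXR χ R ξ : ℝ) : ℂ) := by
  have hsmooth := contDiff_cutoff_rnorm (d := d) hχ
  choose L hL₀ hL using fun i => exists_symBound_dilation hR₀ s (contDiff_pdF hsmooth i)
    ((hasCompactSupport_cutoff_rnorm hχ).fderiv_apply (𝕜 := ℝ) (Pi.single i 1))
    (sub_nonneg.mpr hθ₁)
  have hsum : 0 ≤ ∑ i, L i := Finset.sum_nonneg fun i _ => hL₀ i
  refine ⟨1 + ∑ i, L i, by positivity, fun R hR => ?_⟩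
  have hR₁ : 0 < R := hR₀.trans_le hR
  refine .of_pdF ?_ (fun ξ => (norm_cutXR_le hχ hR₁ hθ₀ ξ).trans ?_) fun r hr i => ?_
  · simp only [ofReal_cutXR hR₁]
    exact contDiff_const.sub
      ((hsmooth.of_le (by exact_mod_cast le_top)).comp (contDiff_const_smul R⁻¹))
  · gcongr
    · exact (jbR_rpow_pos ξ θ).le
    · exact le_mul_of_one_le_left (Real.rpow_nonneg hR₁.le _) (le_add_of_nonneg_right hsum)
  · rw [pdF_cutXR hR₁, ← neg_sub]
    refine (((hL i R hR).mono hr.le).const_mul _).mono_const ?_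
    rw [norm_neg, Complex.norm_real, Real.norm_of_nonneg (inv_nonneg.mpr hR₁.le),
      sub_eq_neg_add, Real.rpow_add_one hR₁.ne']
    calc R⁻¹ * (L i * (R ^ (-θ) * R)) = L i * R ^ (-θ) := by field_simp
      _ ≤ (1 + ∑ i, L i) * R ^ (-θ) := by
          gcongr
          linarith [Finset.single_le_sum (fun i _ => hL₀ i) (Finset.mem_univ i)]

/-! ### Decay of the Fourier coefficients of a symbol -/

lemma symCoeff_pdx {m M : ℝ} {s : ℕ} {a : Sym d} (h : SymBound m (s + 1) M a) (i : Fin d)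
    (p : Zd d) (ξ : Vec d) : symCoeff (pdx i a) p ξ = Complex.I * (p i : ℂ) * symCoeff a p ξ :=
  fCoeff_pdF (u := fun x => a x ξ) ((h.contDiff_one (Nat.le_add_left 1 s)).comp
    (contDiff_id.prodMk contDiff_const)) (h.periodic ξ) i p

/-- The constant in the decay estimate `⟨p⟩^s |â(p,ξ)| ≤ decayConst d s |a| ⟨ξ⟩^m`. -/
def decayConst (d s : ℕ) : ℝ := fourierConst d * (2 * π) ^ d * (1 + d) ^ s

lemma decayConst_pos (d s : ℕ) : 0 < decayConst d s := by
  have := fourierConst_pos d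
  unfold decayConst
  positivity

lemma decayConst_mono {s t : ℕ} (h : s ≤ t) : decayConst d s ≤ decayConst d t := by
  have := fourierConst_pos d
  unfold decayConst
  gcongr
  exact le_add_of_nonneg_right d.cast_nonneg

lemma pow_jb_mul_norm_symCoeff_le {m M : ℝ} {s : ℕ} {a : Sym d} (h : SymBound m s M a)
    (p : Zd d) (ξ : Vec d) : jb p ^ s * ‖symCoeff a p ξ‖ ≤ decayConst d s * M * jbR ξ ^ m := by
  induction s generalizing a with
  | zero =>
    rw [pow_zero, one_mul, decayConst, pow_zero, mul_one, mul_assoc]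
    exact norm_fCoeff_le (fun x => h.norm_le x ξ) p
  | succ s ih =>
    have hderiv (i : Fin d) : |(p i : ℝ)| * ‖symCoeff a p ξ‖ = ‖symCoeff (pdx i a) p ξ‖ := by
      rw [symCoeff_pdx h, norm_mul, norm_mul, Complex.norm_I, one_mul, Complex.norm_intCast]
    calc jb p ^ (s + 1) * ‖symCoeff a p ξ‖ = jb p ^ s * (jb p * ‖symCoeff a p ξ‖) := by ring
      _ ≤ jb p ^ s * ((1 + ∑ i, |(p i : ℝ)|) * ‖symCoeff a p ξ‖) := by
          have := (jb_pos p).le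
          gcongr
          exact jb_le_one_add_sum p
      _ = jb p ^ s * ‖symCoeff a p ξ‖ + ∑ i, jb p ^ s * ‖symCoeff (pdx i a) p ξ‖ := by
          simp only [add_mul, Finset.sum_mul, hderiv, mul_add, one_mul, Finset.mul_sum]
      _ ≤ decayConst d s * M * jbR ξ ^ m + ∑ _ : Fin d, decayConst d s * M * jbR ξ ^ m :=
          add_le_add (ih (h.mono s.le_succ)) (Finset.sum_le_sum fun i _ => ih (h.pdx i))
      _ = decayConst d (s + 1) * M * jbR ξ ^ m := by
          rw [Finset.sum_const, Finset.card_univ, Fintype.card_fin, nsmul_eq_mul]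
          unfold decayConst
          ring

lemma clm_apply_eq_sum (L : Vec d →L[ℝ] ℂ) (v : Vec d) :
    L v = ∑ i, (v i : ℂ) * L (Pi.single i 1) := by
  conv_lhs => rw [pi_eq_sum_univ' v]
  simp only [map_sum, map_smul, Complex.real_smul]

lemma hasDerivAt_symbol_line {a : Sym d} (ha : ContDiff ℝ 1 (Function.uncurry a))
    (x ξ v : Vec d) (t : ℝ) :
    HasDerivAt (fun τ : ℝ => a x (ξ + τ • v)) (∑ i, (v i : ℂ) * pdxi i a x (ξ + t • v)) t := by
  have hdiff : DifferentiableAt ℝ (fun η => a x η) (ξ + t • v) :=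
    (ha.comp (contDiff_const.prodMk contDiff_id)).differentiable one_ne_zero _
  have hline : HasDerivAt (fun τ : ℝ => ξ + τ • v) v t := by
    simpa only [id_eq, one_smul] using ((hasDerivAt_id t).smul_const v).const_add ξ
  refine (hdiff.hasFDerivAt.comp_hasDerivAt t hline).congr_deriv ?_
  exact clm_apply_eq_sum _ v

lemma hasDerivAt_symCoeff {m M : ℝ} {s : ℕ} {a : Sym d} (h : SymBound m (s + 1) M a)
    (p : Zd d) (ξ v : Vec d) (t : ℝ) :
    HasDerivAt (fun τ : ℝ => symCoeff a p (ξ + τ • v))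
      (∑ i, (v i : ℂ) * symCoeff (pdxi i a) p (ξ + t • v)) t := by
  have hcont : Continuous (Function.uncurry fun (τ : ℝ) (x : Vec d) =>
      ∑ i, (v i : ℂ) * pdxi i a x (ξ + τ • v)) :=
    continuous_finsetSum _ fun i _ => continuous_const.mul
      ((h.pdxi i).contDiff.continuous.comp (f := fun q : ℝ × Vec d => (q.2, ξ + q.1 • v))
        (by fun_prop))
  refine (hasDerivAt_fCoeff (fun τ => h.continuous_left (ξ + τ • v)) hcont (fun x τ =>
    hasDerivAt_symbol_line (h.contDiff_one (Nat.le_add_left 1 s)) x ξ v τ) p t).congr_deriv ?_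
  rw [fCoeff_sum (u := fun i x => (v i : ℂ) * pdxi i a x (ξ + t • v)) Finset.univ
    fun i => continuous_const.mul ((h.pdxi i).continuous_left _)]
  exact Finset.sum_congr rfl fun i _ => fCoeff_const_mul _ _ p

/-- The `r`-th derivative of `ξ ↦ â(p,ξ)` in the direction `v`. -/
def dirCoeff : ℕ → Sym d → Vec d → Zd d → Vec d → ℂ
  | 0, a, _, p, ξ => symCoeff a p ξ
  | r + 1, a, v, p, ξ => ∑ i, (v i : ℂ) * dirCoeff r (pdxi i a) v p ξ

lemma hasDerivAt_dirCoeff {m M : ℝ} {r s : ℕ} {a : Sym d} (h : SymBound m s M a) (hr : r < s)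
    (p : Zd d) (ξ v : Vec d) (t : ℝ) :
    HasDerivAt (fun τ : ℝ => dirCoeff r a v p (ξ + τ • v))
      (dirCoeff (r + 1) a v p (ξ + t • v)) t := by
  obtain ⟨s, rfl⟩ := Nat.exists_eq_add_one.mpr (r.zero_le.trans_lt hr)
  induction r generalizing m a s with
  | zero => exact hasDerivAt_symCoeff h p ξ v t
  | succ r ih =>
    obtain ⟨s, rfl⟩ := Nat.exists_eq_add_one.mpr (r.zero_le.trans_lt (Nat.lt_of_succ_lt_succ hr))
    exact HasDerivAt.fun_sum fun i _ =>
      (ih s (h.pdxi i) (Nat.lt_of_succ_lt_succ hr)).const_mul (v i : ℂ)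

lemma pow_jb_mul_norm_dirCoeff_le {m M : ℝ} {r s : ℕ} {a : Sym d} (h : SymBound m (s + r) M a)
    (p : Zd d) (ξ v : Vec d) :
    jb p ^ s * ‖dirCoeff r a v p ξ‖ ≤
      (∑ i, |v i|) ^ r * (decayConst d s * M * jbR ξ ^ (m - r)) := by
  induction r generalizing m a with
  | zero =>
    rw [pow_zero, one_mul, Nat.cast_zero, sub_zero]
    exact pow_jb_mul_norm_symCoeff_le h p ξ
  | succ r ih =>
    calc jb p ^ s * ‖dirCoeff (r + 1) a v p ξ‖
        ≤ jb p ^ s * ∑ i, |v i| * ‖dirCoeff r (pdxi i a) v p ξ‖ := by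
          refine mul_le_mul_of_nonneg_left ?_ (pow_pos (jb_pos p) s).le
          refine norm_sum_le_of_le _ fun i _ => ?_
          rw [norm_mul, Complex.norm_real, Real.norm_eq_abs]
      _ = ∑ i, |v i| * (jb p ^ s * ‖dirCoeff r (pdxi i a) v p ξ‖) := by
          simp only [Finset.mul_sum, mul_left_comm]
      _ ≤ ∑ i, |v i| * ((∑ i, |v i|) ^ r * (decayConst d s * M * jbR ξ ^ (m - 1 - r))) :=
          Finset.sum_le_sum fun i _ =>
            mul_le_mul_of_nonneg_left (ih (h.pdxi i)) (abs_nonneg _)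
      _ = (∑ i, |v i|) ^ (r + 1) * (decayConst d s * M * jbR ξ ^ (m - (r + 1 : ℕ))) := by
          rw [← Finset.sum_mul, Nat.cast_succ, sub_sub, add_comm (1 : ℝ)]
          ring

lemma symCoeff_pdxi_pdx {m M : ℝ} {s : ℕ} {a : Sym d} (h : SymBound m (s + 2) M a)
    (j k : Fin d) (p : Zd d) (ξ : Vec d) :
    symCoeff (pdxi j (pdx k a)) p ξ = Complex.I * (p k : ℂ) * symCoeff (pdxi j a) p ξ := by
  have hleft := hasDerivAt_symCoeff (h.pdx k) p ξ (Pi.single j 1) 0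
  have hright := (hasDerivAt_symCoeff (h.mono (Nat.le_succ (s + 1))) p ξ
    (Pi.single j 1) 0).const_mul (Complex.I * (p k : ℂ))
  simp only [symCoeff_pdx h] at hleft
  have heq := hleft.unique hright
  have hsum (f : Fin d → ℂ) : ∑ i, (((Pi.single j 1 : Vec d) i : ℝ) : ℂ) * f i = f j := by
    rw [Finset.sum_eq_single j
      (fun i _ hij => by rw [Pi.single_eq_of_ne hij, ofReal_zero, zero_mul])
      (fun hj => absurd (Finset.mem_univ j) hj), Pi.single_eq_same, ofReal_one, one_mul]
  rwa [hsum, hsum, zero_smul, add_zero] at heq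

/-! ### Lattice sums and Young's inequality -/

lemma intVec_injective : Function.Injective (intVec : Zd d → Vec d) := fun _ _ h =>
  funext fun i => Int.cast_injective (congrFun h i)

lemma abs_apply_le_jb (n : Zd d) (i : Fin d) : |(n i : ℝ)| ≤ jb n :=
  (abs_apply_le_rnorm (intVec n) i).trans (rnorm_le_jbR _)

lemma norm_intVec_le_jb (n : Zd d) : ‖intVec n‖ ≤ jb n :=
  (pi_norm_le_iff_of_nonneg (jb_pos n).le).mpr (abs_apply_le_jb n)

lemma finite_setOf_jb_le (N : ℝ) : {n : Zd d | jb n ≤ N}.Finite := by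
  refine (Set.finite_Icc (fun _ => ⌈-N⌉ : Zd d) fun _ => ⌊N⌋).subset fun n hn => ?_
  have hbound (i : Fin d) : -N ≤ n i ∧ (n i : ℝ) ≤ N :=
    abs_le.mp ((abs_apply_le_jb n i).trans hn)
  exact ⟨fun i => Int.ceil_le.mpr (hbound i).1, fun i => Int.le_floor.mpr (hbound i).2⟩

lemma intVec_mem_span_basisFun (n : Zd d) :
    intVec n ∈ Submodule.span ℤ (Set.range (Pi.basisFun ℝ (Fin d))) := by
  rw [(Pi.basisFun ℝ (Fin d)).mem_span_iff_repr_mem ℤ]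
  exact fun i => ⟨n i, by simp [intVec]⟩

/-- The weight `⟨p⟩^{-n}`, which is summable over `ℤ^d` when `n > d`. -/
def latticeWeight (n : ℕ) (p : Zd d) : ℝ := (jb p ^ n)⁻¹

lemma latticeWeight_pos (n : ℕ) (p : Zd d) : 0 < latticeWeight n p :=
  inv_pos.mpr (pow_pos (jb_pos p) n)

lemma summable_latticeWeight {n : ℕ} (hn : d < n) : Summable (latticeWeight (d := d) n) := by
  let L := Submodule.span ℤ (Set.range (Pi.basisFun ℝ (Fin d)))
  have hrank : Module.finrank ℤ L = d := by
    rw [ZLattice.rank ℝ L, Module.finrank_fin_fun]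
  have hlattice := ZLattice.summable_norm_pow_inv L n (hrank.symm ▸ hn)
  have hnorm := hlattice.comp_injective
    (i := fun p : Zd d => (⟨intVec p, intVec_mem_span_basisFun p⟩ : L))
    fun _ _ h => intVec_injective (congrArg Subtype.val h)
  refine hnorm.of_norm_bounded_eventually ?_
  filter_upwards [eventually_cofinite_ne (0 : Zd d)] with p hp
  have hpos : 0 < ‖intVec p‖ :=
    norm_pos_iff.mpr fun h => hp (intVec_injective (h.trans (by ext; simp [intVec])))
  rw [Real.norm_of_nonneg (latticeWeight_pos n p).le]
  exact (inv_anti₀ (pow_pos hpos n) (pow_le_pow_left₀ hpos.le (norm_intVec_le_jb p) n)).trans_eq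
    (inv_pow _ n).symm

/-- The convolution of the weight `⟨p⟩^{-n}` with itself. -/
def convWeight (n : ℕ) (m : Zd d) : ℝ := ∑' p, latticeWeight n p * latticeWeight n (m - p)

lemma convWeight_nonneg (n : ℕ) (m : Zd d) : 0 ≤ convWeight n m :=
  tsum_nonneg fun p => (mul_pos (latticeWeight_pos n p) (latticeWeight_pos n _)).le

lemma summable_latticeWeight_prod {n : ℕ} (hn : d < n) :
    Summable fun x : Zd d × Zd d => latticeWeight n x.2 * latticeWeight n (x.1 - x.2) := by
  have hw := summable_latticeWeight hn
  have hprod := hw.mul_of_nonneg hw (fun p => (latticeWeight_pos n p).le)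
    fun p => (latticeWeight_pos n p).le
  refine hprod.comp_injective (i := fun x : Zd d × Zd d => (x.2, x.1 - x.2)) ?_
  rintro ⟨m, p⟩ ⟨m', p'⟩ h
  simp only [Prod.mk.injEq] at h ⊢
  obtain ⟨rfl, hm⟩ := h
  exact ⟨sub_left_injective hm, rfl⟩

lemma summable_convWeight {n : ℕ} (hn : d < n) : Summable (convWeight (d := d) n) :=
  (summable_latticeWeight_prod hn).prod

lemma hasSum_convWeight {n : ℕ} (hn : d < n) (j k : Zd d) :
    HasSum (fun l => latticeWeight n (j - l) * latticeWeight n (l - k)) (convWeight n (j - k)) := by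
  have hsum := ((summable_latticeWeight_prod hn).prod_factor (j - k)).hasSum
  refine ((Equiv.subLeft j).hasSum_iff.mpr hsum).congr_fun fun l => ?_
  rw [Function.comp_apply, Equiv.subLeft_apply, sub_sub_sub_cancel_left]

section Young

variable {G : Type*} [AddCommGroup G] {H f e : G → ℝ}

lemma summable_convolution_sq (hH₀ : ∀ n, 0 ≤ H n) (hH : Summable H)
    (hf : Summable fun n => f n ^ 2) (j : G) : Summable fun k => H (j - k) * f k ^ 2 :=
  Summable.of_nonneg_of_le (fun _ => mul_nonneg (hH₀ _) (sq_nonneg _))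
    (fun k => mul_le_mul_of_nonneg_left (hf.le_tsum k fun _ _ => sq_nonneg _) (hH₀ _))
    (((Equiv.subLeft j).summable_iff.mpr hH).mul_right (∑' n, f n ^ 2))

lemma sq_le_tsum_mul_tsum_of_le_sum (hH₀ : ∀ n, 0 ≤ H n) (hH : Summable H)
    (hf : Summable fun n => f n ^ 2) {x : ℝ} (hx : 0 ≤ x) {j : G} {S : Finset G}
    (hS : x ≤ ∑ k ∈ S, H (j - k) * f k) :
    x ^ 2 ≤ (∑' n, H n) * ∑' k, H (j - k) * f k ^ 2 := by
  have hterm (k : G) : 0 ≤ H (j - k) * f k ^ 2 := mul_nonneg (hH₀ _) (sq_nonneg _)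
  have hrow : ∑ k ∈ S, H (j - k) ≤ ∑' n, H n := by
    rw [← (Equiv.subLeft j).tsum_eq H]
    exact ((Equiv.subLeft j).summable_iff.mpr hH).sum_le_tsum S fun k _ => hH₀ (j - k)
  calc x ^ 2 ≤ (∑ k ∈ S, H (j - k) * f k) ^ 2 := pow_le_pow_left₀ hx hS 2
    _ ≤ (∑ k ∈ S, H (j - k)) * ∑ k ∈ S, H (j - k) * f k ^ 2 :=
        Finset.sum_sq_le_sum_mul_sum_of_sq_le_mul S (fun k _ => hH₀ _) (fun k _ => hterm k)
          fun k _ => le_of_eq (by ring)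
    _ ≤ (∑' n, H n) * ∑' k, H (j - k) * f k ^ 2 :=
        mul_le_mul hrow ((summable_convolution_sq hH₀ hH hf j).sum_le_tsum S fun k _ => hterm k)
          (Finset.sum_nonneg fun k _ => hterm k) (tsum_nonneg hH₀)

lemma tsum_sq_le_of_le_convolution (hH₀ : ∀ n, 0 ≤ H n) (hH : Summable H)
    (hf : Summable fun n => f n ^ 2) (he₀ : ∀ n, 0 ≤ e n)
    (he : ∀ j, ∃ S : Finset G, e j ≤ ∑ k ∈ S, H (j - k) * f k) :
    (Summable fun j => e j ^ 2) ∧ ∑' j, e j ^ 2 ≤ (∑' n, H n) ^ 2 * ∑' n, f n ^ 2 := by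
  have hrow (j : G) : e j ^ 2 ≤ (∑' n, H n) * ∑' k, H (j - k) * f k ^ 2 :=
    (he j).elim fun S hS => sq_le_tsum_mul_tsum_of_le_sum hH₀ hH hf (he₀ j) hS
  have hcolumn (T : Finset G) (k : G) : ∑ j ∈ T, H (j - k) ≤ ∑' n, H n := by
    rw [← (Equiv.subRight k).tsum_eq H]
    exact ((Equiv.subRight k).summable_iff.mpr hH).sum_le_tsum T fun j _ => hH₀ (j - k)
  have hsum := summable_convolution_sq hH₀ hH hf
  have hfinite (T : Finset G) : ∑ j ∈ T, e j ^ 2 ≤ (∑' n, H n) ^ 2 * ∑' n, f n ^ 2 :=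
    calc ∑ j ∈ T, e j ^ 2
        ≤ ∑ j ∈ T, (∑' n, H n) * ∑' k, H (j - k) * f k ^ 2 := Finset.sum_le_sum fun j _ => hrow j
      _ = (∑' n, H n) * ∑' k, ∑ j ∈ T, H (j - k) * f k ^ 2 := by
          rw [← Finset.mul_sum, Summable.tsum_finsetSum fun j _ => hsum j]
      _ ≤ (∑' n, H n) * ∑' k, (∑' n, H n) * f k ^ 2 := by
          refine mul_le_mul_of_nonneg_left ((summable_sum fun j _ => hsum j).tsum_le_tsum
            (fun k => ?_) (hf.mul_left _)) (tsum_nonneg hH₀)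
          rw [← Finset.sum_mul]
          exact mul_le_mul_of_nonneg_right (hcolumn T k) (sq_nonneg _)
      _ = (∑' n, H n) ^ 2 * ∑' n, f n ^ 2 := by rw [tsum_mul_left, sq, mul_assoc]
  exact ⟨summable_of_sum_le (fun j => sq_nonneg (e j)) hfinite,
    Real.tsum_le_of_sum_le (fun j => sq_nonneg _) hfinite⟩

end Young

lemma rpow_two_mul_mul_sq (s : ℝ) (c : Seq d) (n : Zd d) :
    jb n ^ (2 * s) * ‖c n‖ ^ 2 = (jb n ^ s * ‖c n‖) ^ 2 := by
  rw [mul_pow, mul_comm 2 s, Real.rpow_mul (jb_pos n).le, Real.rpow_two]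

lemma hsNorm_le_of_le_convolution {σ s : ℝ} {H : Zd d → ℝ} {c e : Seq d} (hH₀ : ∀ n, 0 ≤ H n)
    (hH : Summable H) (hc : InHsSeq s c)
    (he : ∀ j, ∃ S : Finset (Zd d),
      jb j ^ σ * ‖e j‖ ≤ ∑ k ∈ S, H (j - k) * (jb k ^ s * ‖c k‖)) :
    InHsSeq σ e ∧ hsNorm σ e ≤ (∑' n, H n) * hsNorm s c := by
  simp only [InHsSeq, hsNorm, hsNormSq, rpow_two_mul_mul_sq] at hc ⊢
  obtain ⟨hsum, hle⟩ := tsum_sq_le_of_le_convolution hH₀ hH hc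
    (fun n => mul_nonneg (Real.rpow_nonneg (jb_pos n).le σ) (norm_nonneg (e n))) he
  refine ⟨hsum, (Real.sqrt_le_sqrt hle).trans_eq ?_⟩
  rw [Real.sqrt_mul (sq_nonneg _), Real.sqrt_sq (tsum_nonneg hH₀)]

/-! ### Supports of the paradifferential cutoffs -/

section CutFactor

variable {χ : ℝ → ℝ} {ε : ℝ} {j k l : Zd d}

lemma norm_cutFactor_le (hχ : IsCutoff χ) (ε : ℝ) (j k : Zd d) :
    ‖((cutFactor χ ε j k : ℝ) : ℂ)‖ ≤ 1 := by
  obtain ⟨hnonneg, hle⟩ := hχ.mem (znorm (j - k) / (ε * jb (j + k)))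
  rwa [Complex.norm_real, cutFactor, Real.norm_of_nonneg hnonneg]

lemma rnorm_intVec_sub_le_of_cutFactor_ne_zero (hχ : IsCutoff χ) (hε : 0 < ε)
    (h : cutFactor χ ε j k ≠ 0) : rnorm (intVec (j - k)) ≤ 16 / 5 * ε * jbR (mid j k) := by
  have hscale : 0 < ε * jb (j + k) := mul_pos hε (jb_pos _)
  have hratio : znorm (j - k) / (ε * jb (j + k)) < 8 / 5 := by
    contrapose! h
    exact hχ.eq_zero _ (h.trans (le_abs_self _))
  rw [div_lt_iff₀ hscale, znorm_eq_rnorm] at hratio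
  linarith [mul_le_mul_of_nonneg_left (jb_add_le_two_mul_jbR_mid j k) hε.le]

lemma cutFactor_eq_one (hχ : IsCutoff χ) (hε : 0 < ε)
    (h : rnorm (intVec (j - k)) ≤ 5 / 4 * ε * jbR (mid j k)) : cutFactor χ ε j k = 1 := by
  have hscale : 0 < ε * jb (j + k) := mul_pos hε (jb_pos _)
  refine hχ.eq_one _ ?_
  rw [znorm_eq_rnorm, abs_of_nonneg (div_nonneg (rnorm_nonneg _) hscale.le), div_le_iff₀ hscale]
  linarith [mul_le_mul_of_nonneg_left (jbR_mid_le_jb_add j k) hε.le]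

lemma comparable_of_cutFactor_ne_zero (hχ : IsCutoff χ) (hε₀ : 0 < ε) (hε₁ : ε < 1 / 4)
    (h : cutFactor χ ε j k ≠ 0) :
    Comparable 2 (jb j) (jbR (mid j k)) ∧ Comparable 2 (jb k) (jbR (mid j k)) := by
  have hdist : rnorm (intVec (j - k)) ≤ 4 / 5 * jbR (mid j k) := by
    refine (rnorm_intVec_sub_le_of_cutFactor_ne_zero hχ hε₀ h).trans ?_
    exact mul_le_mul_of_nonneg_right (by linarith) (jbR_pos _).le
  have hhalf : rnorm ((1 / 2 : ℝ) • intVec (j - k)) ≤ 1 / 2 * jbR (mid j k) := by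
    rw [rnorm_smul, abs_of_pos one_half_pos]
    linarith [jbR_pos (mid j k)]
  constructor
  · refine comparable_jbR_of_near (ξ := intVec j) ?_
    rwa [← rnorm_neg, neg_sub, mid_sub_left, rnorm_neg]
  · refine comparable_jbR_of_near (ξ := intVec k) ?_
    rwa [← rnorm_neg, neg_sub, mid_sub_right]

lemma comparable_jb_of_cutFactor_ne_zero (hχ : IsCutoff χ) (hε₀ : 0 < ε) (hε₁ : ε < 1 / 4)
    (h : cutFactor χ ε j k ≠ 0) : Comparable 4 (jb j) (jb k) := by
  obtain ⟨hj, hk⟩ := comparable_of_cutFactor_ne_zero hχ hε₀ hε₁ h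
  convert hj.trans zero_le_two zero_le_two hk.symm using 1
  norm_num

lemma mid_add_half_left (j l k : Zd d) : mid j k + (1 / 2 : ℝ) • intVec (l - k) = mid j l := by
  ext i
  simp only [mid, intVec, Pi.add_apply, Pi.sub_apply, Pi.smul_apply, smul_eq_mul, Int.cast_add,
    Int.cast_sub]
  ring

lemma mid_add_half_right (j l k : Zd d) :
    mid j k + (-(1 / 2) : ℝ) • intVec (j - l) = mid l k := by
  ext i
  simp only [mid, intVec, Pi.add_apply, Pi.sub_apply, Pi.smul_apply, smul_eq_mul, Int.cast_add,
    Int.cast_sub]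
  ring

lemma comparable_jbR_of_sub_eq {ξ : Vec d} {α β : ℝ} (hα : |α| ≤ 1) (hβ : |β| ≤ 1)
    (hξ : ξ - intVec k = α • intVec (j - l) + β • intVec (l - k))
    (h : rnorm (intVec (j - l)) + rnorm (intVec (l - k)) ≤ 1 / 2 * jb k) :
    Comparable 2 (jbR ξ) (jb k) := by
  refine comparable_jbR_of_near (hξ ▸ (rnorm_add_le _ _).trans (le_trans ?_ h))
  rw [rnorm_smul, rnorm_smul]
  exact add_le_add (mul_le_of_le_one_left (rnorm_nonneg _) hα)
    (mul_le_of_le_one_left (rnorm_nonneg _) hβ)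

lemma comparable_jbR_mid_add_left {t : ℝ} (ht : t ∈ Set.Icc (0 : ℝ) 1)
    (h : rnorm (intVec (j - l)) + rnorm (intVec (l - k)) ≤ 1 / 2 * jb k) :
    Comparable 2 (jbR (mid j k + t • (1 / 2 : ℝ) • intVec (l - k))) (jb k) := by
  refine comparable_jbR_of_sub_eq (α := 1 / 2) (β := (1 + t) / 2)
    (abs_le.mpr (by constructor <;> linarith)) (abs_le.mpr ?_) ?_ h
  · constructor <;> linarith [ht.1, ht.2]
  · ext i
    simp only [mid, intVec, Pi.add_apply, Pi.sub_apply, Pi.smul_apply, smul_eq_mul, Int.cast_add,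
      Int.cast_sub]
    ring

lemma comparable_jbR_mid_add_right {t : ℝ} (ht : t ∈ Set.Icc (0 : ℝ) 1)
    (h : rnorm (intVec (j - l)) + rnorm (intVec (l - k)) ≤ 1 / 2 * jb k) :
    Comparable 2 (jbR (mid j k + t • (-(1 / 2) : ℝ) • intVec (j - l))) (jb k) := by
  refine comparable_jbR_of_sub_eq (α := (1 - t) / 2) (β := 1 / 2)
    (abs_le.mpr ?_) (abs_le.mpr (by constructor <;> linarith)) ?_ h
  · constructor <;> linarith [ht.1, ht.2]
  · ext i
    simp only [mid, intVec, Pi.add_apply, Pi.sub_apply, Pi.smul_apply, smul_eq_mul, Int.cast_add,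
      Int.cast_sub]
    ring

lemma cutFactor_eq_one_of_near (hχ : IsCutoff χ) (hε₀ : 0 < ε) (hε₁ : ε < 1 / 4)
    (h : rnorm (intVec (j - l)) + rnorm (intVec (l - k)) ≤ ε / 2 * jb k) :
    cutFactor χ ε j l = 1 ∧ cutFactor χ ε l k = 1 ∧ cutFactor χ ε j k = 1 := by
  have hhalf : rnorm (intVec (j - l)) + rnorm (intVec (l - k)) ≤ 1 / 2 * jb k :=
    h.trans (mul_le_mul_of_nonneg_right (by linarith) (jb_pos k).le)
  have hone {a b : Zd d} (hcomp : Comparable 2 (jbR (mid a b)) (jb k))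
      (hab : rnorm (intVec (a - b)) ≤ ε / 2 * jb k) : cutFactor χ ε a b = 1 := by
    refine cutFactor_eq_one hχ hε₀ (hab.trans ?_)
    nlinarith [hcomp.2, jbR_pos (mid a b)]
  have hjl := comparable_jbR_mid_add_left (Set.right_mem_Icc.mpr zero_le_one) hhalf
  have hlk := comparable_jbR_mid_add_right (Set.right_mem_Icc.mpr zero_le_one) hhalf
  have hjk := comparable_jbR_mid_add_left (Set.left_mem_Icc.mpr zero_le_one) hhalf
  rw [one_smul, mid_add_half_left] at hjl
  rw [one_smul, mid_add_half_right] at hlk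
  rw [zero_smul, add_zero] at hjk
  have hsum : intVec (j - k) = intVec (j - l) + intVec (l - k) := by
    ext i
    simp [intVec]
  exact ⟨hone hjl ((le_add_of_nonneg_right (rnorm_nonneg _)).trans h),
    hone hlk ((le_add_of_nonneg_left (rnorm_nonneg _)).trans h),
    hone hjk (hsum ▸ (rnorm_add_le _ _).trans h)⟩

lemma jb_le_of_far (hε : 0 < ε)
    (h : ε / 2 * jb k < rnorm (intVec (j - l)) + rnorm (intVec (l - k))) :
    jb k ≤ 4 / ε * (jb (j - l) * jb (l - k)) := by
  have hjl : rnorm (intVec (j - l)) ≤ jb (j - l) * jb (l - k) :=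
    (rnorm_le_jbR _).trans (le_mul_of_one_le_right (jb_pos _).le (one_le_jb _))
  have hlk : rnorm (intVec (l - k)) ≤ jb (j - l) * jb (l - k) :=
    (rnorm_le_jbR _).trans (le_mul_of_one_le_left (jb_pos _).le (one_le_jb _))
  rw [div_mul_eq_mul_div, le_div_iff₀ hε]
  linarith

end CutFactor

/-! ### Taylor expansion of the composition kernel -/

section Taylor

variable {E : Type*} [NormedAddCommGroup E] [NormedSpace ℝ E]

lemma norm_sub_taylor_two_le {f f₁ f₂ f₃ : ℝ → E} {C : ℝ} (hf : ∀ t, HasDerivAt f (f₁ t) t)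
    (hf₁ : ∀ t, HasDerivAt f₁ (f₂ t) t) (hf₂ : ∀ t, HasDerivAt f₂ (f₃ t) t)
    (hC : ∀ t ∈ Set.Icc (0 : ℝ) 1, ‖f₃ t‖ ≤ C) :
    ‖f 1 - (f 0 + f₁ 0 + (1 / 2 : ℝ) • f₂ 0)‖ ≤ C / 2 := by
  have hlin (t : ℝ) : HasDerivAt (fun t : ℝ => 1 - t) (-1) t := (hasDerivAt_id t).const_sub 1
  have hquad (t : ℝ) : HasDerivAt (fun t : ℝ => (1 - t) ^ 2 / 2) (-(1 - t)) t :=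
    (((hlin t).pow 2).div_const 2).congr_deriv (by push_cast; ring)
  have hderiv (t : ℝ) : HasDerivAt
      (fun t => f t + (1 - t) • f₁ t + ((1 - t) ^ 2 / 2) • f₂ t) (((1 - t) ^ 2 / 2) • f₃ t) t := by
    refine (((hf t).add ((hlin t).smul (hf₁ t))).add ((hquad t).smul (hf₂ t))).congr_deriv ?_
    module
  have hbound (t : ℝ) (ht : t ∈ Set.Ico (0 : ℝ) 1) : ‖((1 - t) ^ 2 / 2) • f₃ t‖ ≤ C / 2 := by
    have hf₃ := hC t ⟨ht.1, ht.2.le⟩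
    have hsq : (1 - t) ^ 2 ≤ 1 := pow_le_one₀ (sub_nonneg.mpr ht.2.le) (by linarith [ht.1])
    rw [norm_smul, Real.norm_of_nonneg (by positivity)]
    linarith [mul_le_of_le_one_left (norm_nonneg (f₃ t)) hsq]
  have hmean := norm_image_sub_le_of_norm_deriv_le_segment_01'
    (fun t _ => (hderiv t).hasDerivWithinAt) hbound
  simpa only [sub_self, sub_zero, zero_smul, add_zero, one_smul, one_pow, ne_eq,
    OfNat.ofNat_ne_zero, not_false_eq_true, zero_pow, zero_div] using hmean

end Taylor

/-- The product of the `r`-th and `r'`-th derivatives of the two factors of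
`t ↦ Â(p, ξ + tq/2) B̂(q, ξ - tp/2)`. With `p = j - l`, `q = l - k` and `ξ = (j+k)/2`, this function
at `t = 1` is the kernel of the composition `T_A T_B`. -/
def taylorTerm (A B : Sym d) (p q : Zd d) (ξ : Vec d) (r r' : ℕ) (t : ℝ) : ℂ :=
  dirCoeff r A ((1 / 2 : ℝ) • intVec q) p (ξ + t • (1 / 2 : ℝ) • intVec q) *
    dirCoeff r' B ((-(1 / 2) : ℝ) • intVec p) q (ξ + t • (-(1 / 2) : ℝ) • intVec p)

/-- The second order Taylor polynomial at `t = 0` of `t ↦ Â(p, ξ + tq/2) B̂(q, ξ - tp/2)`,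
evaluated at `t = 1`. -/
def taylorPoly (A B : Sym d) (p q : Zd d) (ξ : Vec d) : ℂ :=
  taylorTerm A B p q ξ 0 0 0 + (taylorTerm A B p q ξ 1 0 0 + taylorTerm A B p q ξ 0 1 0) +
    (taylorTerm A B p q ξ 2 0 0 + 2 * taylorTerm A B p q ξ 1 1 0 + taylorTerm A B p q ξ 0 2 0) / 2

section Kernel

variable {μ ν MA MB T : ℝ} {A B : Sym d} {p q : Zd d} {ξ : Vec d}

lemma hasDerivAt_taylorTerm {s r r' : ℕ} (hA : SymBound μ s MA A) (hB : SymBound ν s MB B)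
    (hr : r < s) (hr' : r' < s) (t : ℝ) :
    HasDerivAt (taylorTerm A B p q ξ r r')
      (taylorTerm A B p q ξ (r + 1) r' t + taylorTerm A B p q ξ r (r' + 1) t) t :=
  (hasDerivAt_dirCoeff hA hr p ξ _ t).mul (hasDerivAt_dirCoeff hB hr' q ξ _ t)

lemma norm_taylorTerm_sub_taylorPoly_le {s : ℕ} (hs : 3 ≤ s) (hA : SymBound μ s MA A)
    (hB : SymBound ν s MB B)
    (hT : ∀ t ∈ Set.Icc (0 : ℝ) 1, ∀ r r', r + r' = 3 → ‖taylorTerm A B p q ξ r r' t‖ ≤ T) :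
    ‖taylorTerm A B p q ξ 0 0 1 - taylorPoly A B p q ξ‖ ≤ 4 * T := by
  set F := taylorTerm A B p q ξ
  have hF (r r' : ℕ) (hr : r + r' ≤ 2) (t : ℝ) :
      HasDerivAt (F r r') (F (r + 1) r' t + F r (r' + 1) t) t :=
    hasDerivAt_taylorTerm hA hB (by omega) (by omega) t
  have hthird (t : ℝ) (ht : t ∈ Set.Icc (0 : ℝ) 1) :
      ‖F 3 0 t + 3 * F 2 1 t + 3 * F 1 2 t + F 0 3 t‖ ≤ 8 * T := by
    refine norm_add₄_le.trans ?_
    rw [norm_mul, norm_mul, Complex.norm_ofNat]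
    linarith [hT t ht 3 0 rfl, hT t ht 2 1 rfl, hT t ht 1 2 rfl, hT t ht 0 3 rfl]
  have htaylor := norm_sub_taylor_two_le (f := F 0 0) (f₁ := fun t => F 1 0 t + F 0 1 t)
    (f₂ := fun t => F 2 0 t + 2 * F 1 1 t + F 0 2 t) (hF 0 0 (by norm_num))
    (fun t => ((hF 1 0 (by norm_num) t).add (hF 0 1 (by norm_num) t)).congr_deriv (by ring))
    (fun t => (((hF 2 0 le_rfl t).add ((hF 1 1 le_rfl t).const_mul 2)).add
      (hF 0 2 le_rfl t)).congr_deriv (by ring)) hthird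
  rw [Complex.real_smul, show 8 * T / 2 = 4 * T by ring] at htaylor
  have hpoly : taylorPoly A B p q ξ = F 0 0 0 + (F 1 0 0 + F 0 1 0) +
      ((1 / 2 : ℝ) : ℂ) * (F 2 0 0 + 2 * F 1 1 0 + F 0 2 0) := by
    simp only [F, taylorPoly]
    push_cast
    ring
  rwa [hpoly]

lemma norm_taylorPoly_le (hT : ∀ r r', r + r' ≤ 2 → ‖taylorTerm A B p q ξ r r' 0‖ ≤ T) :
    ‖taylorPoly A B p q ξ‖ ≤ 5 * T := by
  have hfirst := norm_add_le_of_le (hT 1 0 (by norm_num)) (hT 0 1 (by norm_num))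
  have hmixed : ‖2 * taylorTerm A B p q ξ 1 1 0‖ ≤ 2 * T := by
    rw [norm_mul, Complex.norm_ofNat]
    exact mul_le_mul_of_nonneg_left (hT 1 1 le_rfl) zero_le_two
  have hsecond := norm_add_le_of_le (norm_add_le_of_le (hT 2 0 le_rfl) hmixed) (hT 0 2 le_rfl)
  refine norm_add₃_le.trans ?_
  rw [norm_div, Complex.norm_ofNat]
  linarith [hT 0 0 zero_le_two]

lemma taylorTerm_mid (A B : Sym d) (j l k : Zd d) :
    taylorTerm A B (j - l) (l - k) (mid j k) 0 0 1 =
      symCoeff A (j - l) (mid j l) * symCoeff B (l - k) (mid l k) := by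
  rw [taylorTerm, one_smul, one_smul, mid_add_half_left, mid_add_half_right]
  rfl

lemma sum_abs_smul_intVec_le {c : ℝ} (hc : |c| ≤ 1) (q : Zd d) :
    ∑ i, |(c • intVec q) i| ≤ (1 + d) * jb q := by
  calc ∑ i, |(c • intVec q) i| ≤ ∑ _i : Fin d, jb q := by
        refine Finset.sum_le_sum fun i _ => ?_
        rw [Pi.smul_apply, smul_eq_mul, abs_mul]
        exact (mul_le_of_le_one_left (abs_nonneg _) hc).trans (abs_apply_le_jb q i)
    _ = d * jb q := by rw [Finset.sum_const, Finset.card_univ, Fintype.card_fin, nsmul_eq_mul]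
    _ ≤ (1 + d) * jb q := by linarith [jb_pos q]

lemma pow_jb_mul_norm_dirCoeff_le_of_comparable {r s S : ℕ} (hA : SymBound μ S MA A)
    (hS : s + r = S) {k : Zd d} {η v : Vec d} (hη : Comparable 8 (jbR η) (jb k))
    (hv : ∑ i, |v i| ≤ (1 + d) * jb q) :
    jb p ^ s * ‖dirCoeff r A v p η‖ ≤
      jb q ^ r * ((1 + d) ^ r * decayConst d S * MA * 8 ^ (|μ| + r) * jb k ^ (μ - r)) := by
  subst hS
  have hMA := hA.nonneg
  have hrpow : jbR η ^ (μ - r) ≤ 8 ^ (|μ| + r) * jb k ^ (μ - r) := by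
    refine (hη.rpow_le (by norm_num) (jbR_pos η) (jb_pos k) (μ - r)).trans ?_
    refine mul_le_mul_of_nonneg_right ?_ (Real.rpow_nonneg (jb_pos k).le _)
    refine Real.rpow_le_rpow_of_exponent_le (by norm_num) ((abs_sub _ _).trans_eq ?_)
    rw [Nat.abs_cast]
  have hconst : decayConst d s * MA ≤ decayConst d (s + r) * MA :=
    mul_le_mul_of_nonneg_right (decayConst_mono (Nat.le_add_right s r)) hMA
  have hconst₀ : 0 ≤ decayConst d s * MA := mul_nonneg (decayConst_pos d s).le hMA
  calc jb p ^ s * ‖dirCoeff r A v p η‖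
      ≤ (∑ i, |v i|) ^ r * (decayConst d s * MA * jbR η ^ (μ - r)) :=
        pow_jb_mul_norm_dirCoeff_le hA p η v
    _ ≤ ((1 + d) * jb q) ^ r *
          (decayConst d (s + r) * MA * (8 ^ (|μ| + r) * jb k ^ (μ - r))) := by
        refine mul_le_mul (pow_le_pow_left₀ (Finset.sum_nonneg fun _ _ => abs_nonneg _) hv r)
          (mul_le_mul hconst hrpow (jbR_rpow_pos η _).le (hconst₀.trans hconst))
          (mul_nonneg hconst₀ (jbR_rpow_pos η _).le) ?_
        exact pow_nonneg (mul_nonneg (by positivity) (jb_pos q).le) r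
    _ = jb q ^ r *
          ((1 + d) ^ r * decayConst d (s + r) * MA * 8 ^ (|μ| + r) * jb k ^ (μ - r)) := by
        rw [mul_pow]
        ring

/-- The constant in the bound for the terms of the Taylor expansion. -/
def termConst (d n : ℕ) (μ ν : ℝ) : ℝ :=
  (1 + d) ^ 3 * decayConst d (n + 3) ^ 2 * 8 ^ (|μ| + |ν| + 3)

lemma termConst_pos (d n : ℕ) (μ ν : ℝ) : 0 < termConst d n μ ν := by
  have := decayConst_pos d (n + 3)
  unfold termConst
  positivity

lemma pow_mul_norm_taylorTerm_le {n e r r' : ℕ} (hA : SymBound μ (n + 3) MA A)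
    (hB : SymBound ν (n + 3) MB B) (he : r + r' + e = 3) {k : Zd d} {t : ℝ}
    (hη : Comparable 8 (jbR (ξ + t • (1 / 2 : ℝ) • intVec q)) (jb k))
    (hζ : Comparable 8 (jbR (ξ + t • (-(1 / 2) : ℝ) • intVec p)) (jb k)) :
    (jb p * jb q) ^ (n + e) * ‖taylorTerm A B p q ξ r r' t‖ ≤
      termConst d n μ ν * MA * MB * (jb k ^ (μ + ν - 3) * jb k ^ e) := by
  have hp := jb_pos p
  have hq := jb_pos q
  have hk := jb_pos k
  have hMA := hA.nonneg
  have hMB := hB.nonneg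
  have hc := decayConst_pos d (n + 3)
  have hsum : (r : ℝ) + r' + e = 3 := by exact_mod_cast he
  have hfactorA := pow_jb_mul_norm_dirCoeff_le_of_comparable (p := p) (r := r)
    (s := n + e + r') hA (by omega) hη
    (sum_abs_smul_intVec_le (c := 1 / 2) (by norm_num [abs_of_pos]) q)
  have hfactorB := pow_jb_mul_norm_dirCoeff_le_of_comparable (p := q) (r := r')
    (s := n + e + r) hB (by omega) hζ
    (sum_abs_smul_intVec_le (c := -(1 / 2)) (by norm_num [abs_of_pos]) p)
  have hrpow : jb k ^ (μ - r) * jb k ^ (ν - r') = jb k ^ (μ + ν - 3) * jb k ^ e := by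
    rw [← Real.rpow_natCast (jb k) e, ← Real.rpow_add hk, ← Real.rpow_add hk]
    congr 1
    linarith
  have hconst : ((1 : ℝ) + d) ^ r * (1 + d) ^ r' * ((8 : ℝ) ^ (|μ| + r) * 8 ^ (|ν| + r')) ≤
      (1 + d) ^ 3 * 8 ^ (|μ| + |ν| + 3) := by
    rw [← pow_add, ← Real.rpow_add (by norm_num)]
    refine mul_le_mul (pow_le_pow_right₀ (le_add_of_nonneg_right d.cast_nonneg) (by omega))
      (Real.rpow_le_rpow_of_exponent_le (by norm_num) ?_) (by positivity) (by positivity)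
    linarith [e.cast_nonneg (α := ℝ)]
  refine le_of_mul_le_mul_left ?_ (mul_pos (pow_pos hp r') (pow_pos hq r))
  rw [taylorTerm, norm_mul]
  refine le_trans (le_of_eq (by ring))
    ((mul_le_mul hfactorA hfactorB (by positivity) (by positivity)).trans ?_)
  have hscale := mul_le_mul_of_nonneg_right hconst
    (show 0 ≤ jb p ^ r' * jb q ^ r * (decayConst d (n + 3) ^ 2 * MA * MB) *
      (jb k ^ (μ - r) * jb k ^ (ν - r')) by positivity)
  rw [← hrpow, termConst]
  linarith

lemma norm_taylorTerm_le {n e r r' : ℕ} {Λ : ℝ} (hA : SymBound μ (n + 3) MA A)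
    (hB : SymBound ν (n + 3) MB B) (he : r + r' + e = 3) {k : Zd d} {t : ℝ}
    (hη : Comparable 8 (jbR (ξ + t • (1 / 2 : ℝ) • intVec q)) (jb k))
    (hζ : Comparable 8 (jbR (ξ + t • (-(1 / 2) : ℝ) • intVec p)) (jb k))
    (hΛ : jb k ^ e ≤ Λ * (jb p * jb q) ^ e) :
    ‖taylorTerm A B p q ξ r r' t‖ ≤ Λ * (termConst d n μ ν * MA * MB * jb k ^ (μ + ν - 3) *
      (latticeWeight n p * latticeWeight n q)) := by
  have hpq : 0 < jb p * jb q := mul_pos (jb_pos p) (jb_pos q)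
  have hconst : 0 ≤ termConst d n μ ν * MA * MB * jb k ^ (μ + ν - 3) :=
    mul_nonneg (mul_nonneg (mul_nonneg (termConst_pos d n μ ν).le hA.nonneg) hB.nonneg)
      (Real.rpow_nonneg (jb_pos k).le _)
  rw [latticeWeight, latticeWeight, ← mul_inv, ← mul_pow, ← mul_assoc,
    le_mul_inv_iff₀ (pow_pos hpq n)]
  refine le_of_mul_le_mul_left ?_ (pow_pos hpq e)
  calc (jb p * jb q) ^ e * (‖taylorTerm A B p q ξ r r' t‖ * (jb p * jb q) ^ n)
      = (jb p * jb q) ^ (n + e) * ‖taylorTerm A B p q ξ r r' t‖ := by ring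
    _ ≤ termConst d n μ ν * MA * MB * (jb k ^ (μ + ν - 3) * jb k ^ e) :=
        pow_mul_norm_taylorTerm_le hA hB he hη hζ
    _ = termConst d n μ ν * MA * MB * jb k ^ (μ + ν - 3) * jb k ^ e := by ring
    _ ≤ termConst d n μ ν * MA * MB * jb k ^ (μ + ν - 3) * (Λ * (jb p * jb q) ^ e) :=
        mul_le_mul_of_nonneg_left hΛ hconst
    _ = (jb p * jb q) ^ e * (Λ * (termConst d n μ ν * MA * MB * jb k ^ (μ + ν - 3))) := by ring

/-- The kernel `κ(j, l, k)` of the remainder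
`T_A T_B - T_{AB} - (1/2i) T_{{A,B}} + (1/8) T_{σ(A,B)}`, before summation over the intermediate
frequency `l`. -/
def remainderKernel (χ : ℝ → ℝ) (ε : ℝ) (A B : Sym d) (j l k : Zd d) : ℂ :=
  (cutFactor χ ε j l : ℂ) * (cutFactor χ ε l k : ℂ) *
      (symCoeff A (j - l) (mid j l) * symCoeff B (l - k) (mid l k)) -
    (cutFactor χ ε j k : ℂ) * taylorPoly A B (j - l) (l - k) (mid j k)

/-- The bound for a single Taylor term at `p = j - l`, `q = l - k`. -/
def kernelBound (n : ℕ) (μ ν MA MB : ℝ) (j l k : Zd d) : ℝ :=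
  termConst d n μ ν * MA * MB * jb k ^ (μ + ν - 3) *
    (latticeWeight n (j - l) * latticeWeight n (l - k))

variable {χ : ℝ → ℝ} {ε : ℝ} {j l k : Zd d} {n : ℕ}

lemma kernelBound_nonneg (hMA : 0 ≤ MA) (hMB : 0 ≤ MB) : 0 ≤ kernelBound n μ ν MA MB j l k := by
  have := termConst_pos d n μ ν
  have := Real.rpow_nonneg (jb_pos k).le (μ + ν - 3)
  have := latticeWeight_pos n (j - l)
  have := latticeWeight_pos n (l - k)
  unfold kernelBound
  positivity

lemma norm_remainderKernel_le_of_near (hχ : IsCutoff χ) (hε₀ : 0 < ε) (hε₁ : ε < 1 / 4)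
    (hA : SymBound μ (n + 3) MA A) (hB : SymBound ν (n + 3) MB B)
    (h : rnorm (intVec (j - l)) + rnorm (intVec (l - k)) ≤ ε / 2 * jb k) :
    ‖remainderKernel χ ε A B j l k‖ ≤ 4 * kernelBound n μ ν MA MB j l k := by
  obtain ⟨hjl, hlk, hjk⟩ := cutFactor_eq_one_of_near hχ hε₀ hε₁ h
  have hhalf : rnorm (intVec (j - l)) + rnorm (intVec (l - k)) ≤ 1 / 2 * jb k :=
    h.trans (mul_le_mul_of_nonneg_right (by linarith) (jb_pos k).le)
  rw [remainderKernel, hjl, hlk, hjk, Complex.ofReal_one, one_mul, one_mul, one_mul,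
    ← taylorTerm_mid]
  refine norm_taylorTerm_sub_taylorPoly_le (Nat.le_add_left 3 n) hA hB fun t ht r r' hr => ?_
  rw [← one_mul (kernelBound n μ ν MA MB j l k)]
  exact norm_taylorTerm_le (e := 0) hA hB hr
    ((comparable_jbR_mid_add_left ht hhalf).mono (jbR_pos _).le (jb_pos k).le (by norm_num))
    ((comparable_jbR_mid_add_right ht hhalf).mono (jbR_pos _).le (jb_pos k).le (by norm_num))
    (by rw [pow_zero, pow_zero, one_mul])

lemma jb_pow_le_of_le_mul (hε₀ : 0 < ε) (hε₁ : ε < 1 / 4) {e : ℕ} (he : e ≤ 3)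
    (h : jb k ≤ 4 / ε * (jb p * jb q)) : jb k ^ e ≤ (4 / ε) ^ 3 * (jb p * jb q) ^ e := by
  have hΛ : 1 ≤ 4 / ε := by
    rw [le_div_iff₀ hε₀]
    linarith
  refine (pow_le_pow_left₀ (jb_pos k).le h e).trans ?_
  rw [mul_pow]
  exact mul_le_mul_of_nonneg_right (pow_le_pow_right₀ hΛ he)
    (pow_nonneg (mul_pos (jb_pos p) (jb_pos q)).le e)

lemma norm_cutFactor_mul_taylorPoly_le_of_far (hχ : IsCutoff χ) (hε₀ : 0 < ε) (hε₁ : ε < 1 / 4)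
    (hA : SymBound μ (n + 3) MA A) (hB : SymBound ν (n + 3) MB B)
    (h : jb k ≤ 4 / ε * (jb (j - l) * jb (l - k))) :
    ‖(cutFactor χ ε j k : ℂ) * taylorPoly A B (j - l) (l - k) (mid j k)‖ ≤
      5 * ((4 / ε) ^ 3 * kernelBound n μ ν MA MB j l k) := by
  by_cases hjk : cutFactor χ ε j k = 0
  · rw [hjk, Complex.ofReal_zero, zero_mul, norm_zero]
    have := kernelBound_nonneg (μ := μ) (ν := ν) (n := n) (j := j) (l := l) (k := k)
      hA.nonneg hB.nonneg
    positivity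
  have hmid : Comparable 8 (jbR (mid j k)) (jb k) :=
    (comparable_of_cutFactor_ne_zero hχ hε₀ hε₁ hjk).2.symm.mono (jbR_pos _).le (jb_pos k).le
      (by norm_num)
  have hpoly : ‖taylorPoly A B (j - l) (l - k) (mid j k)‖ ≤
      5 * ((4 / ε) ^ 3 * kernelBound n μ ν MA MB j l k) := by
    refine norm_taylorPoly_le fun r r' hr => ?_
    obtain ⟨e, he⟩ := Nat.exists_eq_add_of_le (hr.trans (Nat.le_succ 2))
    exact norm_taylorTerm_le hA hB he.symm (by rwa [zero_smul, add_zero])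
      (by rwa [zero_smul, add_zero]) (jb_pow_le_of_le_mul hε₀ hε₁ (by omega) h)
  rw [norm_mul]
  exact (mul_le_of_le_one_left (norm_nonneg _) (norm_cutFactor_le hχ ε j k)).trans hpoly

lemma norm_cutFactor_mul_symCoeff_le_of_far (hχ : IsCutoff χ) (hε₀ : 0 < ε) (hε₁ : ε < 1 / 4)
    (hA : SymBound μ (n + 3) MA A) (hB : SymBound ν (n + 3) MB B)
    (h : jb k ≤ 4 / ε * (jb (j - l) * jb (l - k))) :
    ‖(cutFactor χ ε j l : ℂ) * (cutFactor χ ε l k : ℂ) *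
      (symCoeff A (j - l) (mid j l) * symCoeff B (l - k) (mid l k))‖ ≤
      (4 / ε) ^ 3 * kernelBound n μ ν MA MB j l k := by
  by_cases hzero : cutFactor χ ε j l = 0 ∨ cutFactor χ ε l k = 0
  · rw [← Complex.ofReal_mul, mul_eq_zero.mpr hzero, Complex.ofReal_zero, zero_mul, norm_zero]
    have := kernelBound_nonneg (μ := μ) (ν := ν) (n := n) (j := j) (l := l) (k := k)
      hA.nonneg hB.nonneg
    positivity
  push Not at hzero
  have hjl : Comparable 8 (jbR (mid j l)) (jb k) := by
    convert (comparable_of_cutFactor_ne_zero hχ hε₀ hε₁ hzero.1).2.symm.trans zero_le_two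
      (by norm_num) (comparable_jb_of_cutFactor_ne_zero hχ hε₀ hε₁ hzero.2) using 1
    norm_num
  have hlk : Comparable 8 (jbR (mid l k)) (jb k) :=
    (comparable_of_cutFactor_ne_zero hχ hε₀ hε₁ hzero.2).2.symm.mono (jbR_pos _).le
      (jb_pos k).le (by norm_num)
  have hproduct : ‖symCoeff A (j - l) (mid j l) * symCoeff B (l - k) (mid l k)‖ ≤
      (4 / ε) ^ 3 * kernelBound n μ ν MA MB j l k := by
    rw [← taylorTerm_mid]
    exact norm_taylorTerm_le (e := 3) hA hB rfl (by rwa [one_smul, mid_add_half_left])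
      (by rwa [one_smul, mid_add_half_right]) (jb_pow_le_of_le_mul hε₀ hε₁ le_rfl h)
  rw [norm_mul, norm_mul]
  exact (mul_le_of_le_one_left (norm_nonneg _) (mul_le_one₀ (norm_cutFactor_le hχ ε j l)
    (norm_nonneg _) (norm_cutFactor_le hχ ε l k))).trans hproduct

lemma norm_remainderKernel_le (hχ : IsCutoff χ) (hε₀ : 0 < ε) (hε₁ : ε < 1 / 4)
    (hA : SymBound μ (n + 3) MA A) (hB : SymBound ν (n + 3) MB B) (j l k : Zd d) :
    ‖remainderKernel χ ε A B j l k‖ ≤ 6 * ((4 / ε) ^ 3 * kernelBound n μ ν MA MB j l k) := by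
  rcases le_or_gt (rnorm (intVec (j - l)) + rnorm (intVec (l - k))) (ε / 2 * jb k) with h | h
  · have hΛ : 1 ≤ (4 / ε) ^ 3 := one_le_pow₀ (by rw [le_div_iff₀ hε₀]; linarith)
    have hbound : 0 ≤ kernelBound n μ ν MA MB j l k := kernelBound_nonneg hA.nonneg hB.nonneg
    linarith [norm_remainderKernel_le_of_near hχ hε₀ hε₁ hA hB h,
      le_mul_of_one_le_left hbound hΛ]
  · have hfar := jb_le_of_far hε₀ h
    refine (norm_sub_le _ _).trans ?_
    linarith [norm_cutFactor_mul_symCoeff_le_of_far hχ hε₀ hε₁ hA hB hfar,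
      norm_cutFactor_mul_taylorPoly_le_of_far hχ hε₀ hε₁ hA hB hfar]

lemma comparable_of_remainderKernel_ne_zero (hχ : IsCutoff χ) (hε₀ : 0 < ε) (hε₁ : ε < 1 / 4)
    (h : remainderKernel χ ε A B j l k ≠ 0) : Comparable 16 (jb j) (jb k) := by
  by_cases hjk : cutFactor χ ε j k = 0
  · have hjl : cutFactor χ ε j l ≠ 0 := by
      contrapose! h
      rw [remainderKernel, h, hjk, Complex.ofReal_zero, zero_mul, zero_mul, zero_mul, sub_zero]
    have hlk : cutFactor χ ε l k ≠ 0 := by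
      contrapose! h
      rw [remainderKernel, h, hjk, Complex.ofReal_zero, mul_zero, zero_mul, zero_mul, sub_zero]
    convert (comparable_jb_of_cutFactor_ne_zero hχ hε₀ hε₁ hjl).trans (by norm_num) (by norm_num)
      (comparable_jb_of_cutFactor_ne_zero hχ hε₀ hε₁ hlk) using 1
    norm_num
  · exact (comparable_jb_of_cutFactor_ne_zero hχ hε₀ hε₁ hjk).mono (jb_pos j).le (jb_pos k).le
      (by norm_num)

lemma rpow_jb_mul_norm_remainderKernel_le (hχ : IsCutoff χ) (hε₀ : 0 < ε) (hε₁ : ε < 1 / 4)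
    (hA : SymBound μ (n + 3) MA A) (hB : SymBound ν (n + 3) MB B) (σ : ℝ) (j l k : Zd d) :
    jb j ^ σ * ‖remainderKernel χ ε A B j l k‖ ≤
      16 ^ |σ| * jb k ^ σ * (6 * ((4 / ε) ^ 3 * kernelBound n μ ν MA MB j l k)) := by
  have hle := norm_remainderKernel_le hχ hε₀ hε₁ hA hB j l k
  have hweight : 0 ≤ (16 : ℝ) ^ |σ| * jb k ^ σ :=
    mul_nonneg (by positivity) (Real.rpow_nonneg (jb_pos k).le σ)
  by_cases h : remainderKernel χ ε A B j l k = 0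
  · rw [h, norm_zero] at hle ⊢
    rw [mul_zero]
    exact mul_nonneg hweight hle
  · exact mul_le_mul ((comparable_of_remainderKernel_ne_zero hχ hε₀ hε₁ h).rpow_le (by norm_num)
      (jb_pos j) (jb_pos k) σ) hle (norm_nonneg _) hweight

end Kernel

/-! ### Symbolic calculus -/

/-- `fourierConst d * ∑ p, F p` converges to the `n`-th Fourier coefficient of the continuous
function `f`, as in the formula for the Fourier coefficients of a product. -/
structure HasCoeffSeries (n : Zd d) (F : Zd d → ℂ) (f : Fn d) : Prop where
  continuous : Continuous f
  hasSum : HasSum (fun p => (fourierConst d : ℂ) * F p) (fCoeff f n)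

section HasCoeffSeries

variable {n : Zd d} {F G : Zd d → ℂ} {f g : Fn d}

lemma HasCoeffSeries.add (hf : HasCoeffSeries n F f) (hg : HasCoeffSeries n G g) :
    HasCoeffSeries n (fun p => F p + G p) (fun x => f x + g x) where
  continuous := hf.continuous.add hg.continuous
  hasSum := by
    rw [fCoeff_add hf.continuous hg.continuous]
    simpa only [mul_add] using hf.hasSum.add hg.hasSum

lemma HasCoeffSeries.sub (hf : HasCoeffSeries n F f) (hg : HasCoeffSeries n G g) :
    HasCoeffSeries n (fun p => F p - G p) (fun x => f x - g x) where
  continuous := hf.continuous.sub hg.continuous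
  hasSum := by
    rw [fCoeff_sub hf.continuous hg.continuous]
    simpa only [mul_sub] using hf.hasSum.sub hg.hasSum

lemma HasCoeffSeries.const_mul (c : ℂ) (hf : HasCoeffSeries n F f) :
    HasCoeffSeries n (fun p => c * F p) (fun x => c * f x) where
  continuous := continuous_const.mul hf.continuous
  hasSum := by
    rw [fCoeff_const_mul]
    simpa only [mul_left_comm] using hf.hasSum.mul_left c

lemma HasCoeffSeries.sum {ι : Type*} (t : Finset ι) {F : ι → Zd d → ℂ} {f : ι → Fn d}
    (h : ∀ i, HasCoeffSeries n (F i) (f i)) :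
    HasCoeffSeries n (fun p => ∑ i ∈ t, F i p) (fun x => ∑ i ∈ t, f i x) where
  continuous := continuous_finsetSum _ fun i _ => (h i).continuous
  hasSum := by
    rw [fCoeff_sum t (u := f) fun i => (h i).continuous]
    simpa only [Finset.mul_sum] using hasSum_sum fun i _ => (h i).hasSum

end HasCoeffSeries

section Calculus

variable {μ ν MA MB : ℝ} {s : ℕ} {A B : Sym d}

lemma SymBound.summable_symCoeff (hA : SymBound μ s MA A) (hs : d < s) (ξ : Vec d) :
    Summable fun p => symCoeff A p ξ := by
  refine .of_norm_bounded ((summable_latticeWeight hs).mul_left (decayConst d s * MA * jbR ξ ^ μ))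
    fun p => ?_
  rw [latticeWeight, le_mul_inv_iff₀ (pow_pos (jb_pos p) s), mul_comm]
  exact pow_jb_mul_norm_symCoeff_le hA p ξ

lemma hasCoeffSeries_mul {r : ℕ} (hA : SymBound μ s MA A) (hB : SymBound ν r MB B) (hs : d < s)
    (n : Zd d) (ξ : Vec d) :
    HasCoeffSeries n (fun p => symCoeff A p ξ * symCoeff B (n - p) ξ)
      (fun x => A x ξ * B x ξ) where
  continuous := (hA.continuous_left ξ).mul (hB.continuous_left ξ)
  hasSum := hasSum_fCoeff_mul (hA.continuous_left ξ) (hA.periodic ξ) (hB.continuous_left ξ)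
    (hA.summable_symCoeff hs ξ) n

lemma dirCoeff_zero (A : Sym d) (v : Vec d) (p : Zd d) (ξ : Vec d) :
    dirCoeff 0 A v p ξ = symCoeff A p ξ :=
  rfl

lemma dirCoeff_one_smul (A : Sym d) (c : ℝ) (q p : Zd d) (ξ : Vec d) :
    dirCoeff 1 A (c • intVec q) p ξ = ∑ i, (c * q i : ℂ) * symCoeff (pdxi i A) p ξ :=
  Finset.sum_congr rfl fun i _ => congrArg (· * symCoeff (pdxi i A) p ξ)
    (by simp only [intVec, Pi.smul_apply, smul_eq_mul]; push_cast; rfl)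

lemma dirCoeff_two_smul (A : Sym d) (c : ℝ) (q p : Zd d) (ξ : Vec d) :
    dirCoeff 2 A (c • intVec q) p ξ =
      ∑ i, ∑ j, (c * q i * (c * q j) : ℂ) * symCoeff (pdxi i (pdxi j A)) p ξ := by
  have hstep : dirCoeff 2 A (c • intVec q) p ξ =
      ∑ j, ((c • intVec q) j : ℂ) * dirCoeff 1 (pdxi j A) (c • intVec q) p ξ := rfl
  rw [hstep, Finset.sum_comm]
  refine Finset.sum_congr rfl fun j _ => ?_
  rw [dirCoeff_one_smul, Finset.mul_sum]
  refine Finset.sum_congr rfl fun i _ => ?_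
  simp only [intVec, Pi.smul_apply, smul_eq_mul]
  push_cast
  ring

lemma taylorTerm_zero (A B : Sym d) (p q : Zd d) (ξ : Vec d) (r r' : ℕ) :
    taylorTerm A B p q ξ r r' 0 = dirCoeff r A ((1 / 2 : ℝ) • intVec q) p ξ *
      dirCoeff r' B ((-(1 / 2) : ℝ) • intVec p) q ξ := by
  simp only [taylorTerm, zero_smul, add_zero]

lemma taylorTerm_order_one (hA : SymBound μ (s + 1) MA A) (hB : SymBound ν (s + 1) MB B)
    (p q : Zd d) (ξ : Vec d) :
    taylorTerm A B p q ξ 1 0 0 + taylorTerm A B p q ξ 0 1 0 = 1 / (2 * I) *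
      ∑ j, (symCoeff (pdxi j A) p ξ * symCoeff (pdx j B) q ξ -
        symCoeff (pdx j A) p ξ * symCoeff (pdxi j B) q ξ) := by
  simp only [taylorTerm_zero, dirCoeff_one_smul, dirCoeff_zero, symCoeff_pdx hA, symCoeff_pdx hB,
    Finset.sum_mul, Finset.mul_sum, ← Finset.sum_add_distrib]
  refine Finset.sum_congr rfl fun j _ => ?_
  push_cast
  field_simp
  ring

lemma taylorTerm_order_two (hA : SymBound μ (s + 2) MA A) (hB : SymBound ν (s + 2) MB B)
    (p q : Zd d) (ξ : Vec d) :
    (taylorTerm A B p q ξ 2 0 0 + 2 * taylorTerm A B p q ξ 1 1 0 + taylorTerm A B p q ξ 0 2 0) / 2 =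
      -(1 / 8) * ∑ j, ∑ k, (symCoeff (pdxi j (pdxi k A)) p ξ * symCoeff (pdx j (pdx k B)) q ξ -
        2 * (symCoeff (pdx j (pdxi k A)) p ξ * symCoeff (pdxi j (pdx k B)) q ξ) +
        symCoeff (pdx j (pdx k A)) p ξ * symCoeff (pdxi j (pdxi k B)) q ξ) := by
  have hmixed : taylorTerm A B p q ξ 1 1 0 =
      ∑ j, ∑ k, ((1 / 2 : ℝ) * q k : ℂ) * symCoeff (pdxi k A) p ξ *
        (((-(1 / 2) : ℝ) * p j : ℂ) * symCoeff (pdxi j B) q ξ) := by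
    rw [taylorTerm_zero, dirCoeff_one_smul, dirCoeff_one_smul, Finset.sum_mul_sum, Finset.sum_comm]
  rw [hmixed]
  simp only [taylorTerm_zero, dirCoeff_two_smul, dirCoeff_zero, symCoeff_pdxi_pdx hB,
    fun j k => symCoeff_pdx (hA.pdxi k) j p ξ, fun j k => symCoeff_pdx (hA.pdx k) j p ξ,
    fun j k => symCoeff_pdx (hB.pdx k) j q ξ, symCoeff_pdx hA, symCoeff_pdx hB,
    Finset.sum_mul, Finset.mul_sum, Finset.sum_div, ← Finset.sum_add_distrib]
  refine Finset.sum_congr rfl fun j _ => Finset.sum_congr rfl fun k _ => ?_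
  push_cast
  linear_combination (1 / 8 : ℂ) *
    (symCoeff (pdxi j (pdxi k A)) p ξ * q j * q k * symCoeff B q ξ -
      2 * p j * symCoeff (pdxi k A) p ξ * q k * symCoeff (pdxi j B) q ξ +
      p j * p k * symCoeff A p ξ * symCoeff (pdxi j (pdxi k B)) q ξ) * I_mul_I

lemma hasCoeffSeries_poisson (hA : SymBound μ (s + 1) MA A) (hB : SymBound ν (s + 1) MB B)
    (hs : d < s) (n : Zd d) (ξ : Vec d) :
    HasCoeffSeries n (fun p => ∑ j, (symCoeff (pdxi j A) p ξ * symCoeff (pdx j B) (n - p) ξ -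
      symCoeff (pdx j A) p ξ * symCoeff (pdxi j B) (n - p) ξ)) (fun x => poisson A B x ξ) :=
  .sum _ fun j => (hasCoeffSeries_mul (hA.pdxi j) (hB.pdx j) hs n ξ).sub
    (hasCoeffSeries_mul (hA.pdx j) (hB.pdxi j) hs n ξ)

lemma hasCoeffSeries_sigmaB (hA : SymBound μ (s + 2) MA A) (hB : SymBound ν (s + 2) MB B)
    (hs : d < s) (n : Zd d) (ξ : Vec d) :
    HasCoeffSeries n (fun p => ∑ j, ∑ k,
      (symCoeff (pdxi j (pdxi k A)) p ξ * symCoeff (pdx j (pdx k B)) (n - p) ξ -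
        2 * (symCoeff (pdx j (pdxi k A)) p ξ * symCoeff (pdxi j (pdx k B)) (n - p) ξ) +
        symCoeff (pdx j (pdx k A)) p ξ * symCoeff (pdxi j (pdxi k B)) (n - p) ξ))
      (fun x => sigmaB A B x ξ) := by
  simp only [sigmaB, mul_assoc]
  exact .sum _ fun j => .sum _ fun k =>
    ((hasCoeffSeries_mul ((hA.pdxi k).pdxi j) ((hB.pdx k).pdx j) hs n ξ).sub
      ((hasCoeffSeries_mul ((hA.pdxi k).pdx j) ((hB.pdx k).pdxi j) hs n ξ).const_mul 2)).add
      (hasCoeffSeries_mul ((hA.pdx k).pdx j) ((hB.pdxi k).pdxi j) hs n ξ)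

/-- The symbol `AB + (1/2i){A,B} - (1/8)σ(A,B)` of the composition up to third order terms. -/
def moyalSymbol (A B : Sym d) : Sym d := fun x ξ =>
  A x ξ * B x ξ + 1 / (2 * I) * poisson A B x ξ - 1 / 8 * sigmaB A B x ξ

lemma hasCoeffSeries_moyalSymbol (hA : SymBound μ (s + 2) MA A) (hB : SymBound ν (s + 2) MB B)
    (hs : d < s) (n : Zd d) (ξ : Vec d) :
    HasCoeffSeries n (fun p => taylorPoly A B p (n - p) ξ) (fun x => moyalSymbol A B x ξ) := by
  simp only [taylorPoly, taylorTerm_order_one (s := s + 1) hA hB, taylorTerm_order_two hA hB,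
    neg_mul, ← sub_eq_add_neg, taylorTerm_zero A B _ _ ξ 0 0]
  exact ((hasCoeffSeries_mul hA hB (by omega) n ξ).add
    ((hasCoeffSeries_poisson (s := s + 1) hA hB (by omega) n ξ).const_mul _)).sub
    ((hasCoeffSeries_sigmaB hA hB hs n ξ).const_mul _)

end Calculus

/-! ### The composition remainder -/

section Composition

variable {χ : ℝ → ℝ} {ε μ ν MA MB : ℝ} {A B : Sym d} {j : Zd d} {S : Finset (Zd d)}

lemma exists_finset_of_cutFactor_ne_zero (hχ : IsCutoff χ) (hε₀ : 0 < ε) (hε₁ : ε < 1 / 4)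
    (j : Zd d) : ∃ S : Finset (Zd d), (∀ k, cutFactor χ ε j k ≠ 0 → k ∈ S) ∧
      ∀ l k, cutFactor χ ε j l ≠ 0 → cutFactor χ ε l k ≠ 0 → k ∈ S := by
  have hle {l k : Zd d} (h : cutFactor χ ε l k ≠ 0) : jb k ≤ 4 * jb l :=
    (comparable_jb_of_cutFactor_ne_zero hχ hε₀ hε₁ h).2
  refine ⟨(finite_setOf_jb_le (16 * jb j)).toFinset, fun k hk => ?_, fun l k hl hk => ?_⟩ <;>
    rw [Set.Finite.mem_toFinset, Set.mem_ofPred_eq]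
  · linarith [hle hk, jb_pos j]
  · linarith [hle hl, hle hk]

lemma paraC_eq_sum (A : Sym d) (c : Seq d) (hS : ∀ k, cutFactor χ ε j k ≠ 0 → k ∈ S) :
    paraC χ ε A c j = (fourierConst d : ℂ) *
      ∑ k ∈ S, (cutFactor χ ε j k : ℂ) * symCoeff A (j - k) (mid j k) * c k := by
  refine congrArg ((fourierConst d : ℂ) * ·) (tsum_eq_sum fun k hk => ?_)
  rw [not_ne_iff.mp (mt (hS k) hk), ofReal_zero, zero_mul, zero_mul]

lemma paraC_paraC_eq_sum (A B : Sym d) (c : Seq d) (hS : ∀ k, cutFactor χ ε j k ≠ 0 → k ∈ S)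
    (hS' : ∀ l k, cutFactor χ ε j l ≠ 0 → cutFactor χ ε l k ≠ 0 → k ∈ S) :
    paraC χ ε A (paraC χ ε B c) j = (fourierConst d : ℂ) *
      ∑ k ∈ S, (fourierConst d * ∑ l ∈ S, (cutFactor χ ε j l : ℂ) * (cutFactor χ ε l k : ℂ) *
        (symCoeff A (j - l) (mid j l) * symCoeff B (l - k) (mid l k))) * c k := by
  rw [paraC_eq_sum A _ hS]
  simp only [Finset.mul_sum, Finset.sum_mul]
  rw [Finset.sum_comm (s := S) (t := S)]
  refine Finset.sum_congr rfl fun l _ => ?_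
  by_cases hl : cutFactor χ ε j l = 0
  · simp only [hl, ofReal_zero, zero_mul, mul_zero, Finset.sum_const_zero]
  · rw [paraC_eq_sum B c fun k => hS' l k hl, Finset.mul_sum, Finset.mul_sum, Finset.mul_sum]
    refine Finset.sum_congr rfl fun k _ => ?_
    ring

lemma symCoeff_moyalSymbol {s : ℕ} (hA : SymBound μ (s + 2) MA A) (hB : SymBound ν (s + 2) MB B)
    (hs : d < s) (n : Zd d) (ξ : Vec d) :
    symCoeff (moyalSymbol A B) n ξ = symCoeff (fun x ξ => A x ξ * B x ξ) n ξ +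
      1 / (2 * I) * symCoeff (poisson A B) n ξ - 1 / 8 * symCoeff (sigmaB A B) n ξ := by
  have hmul := hasCoeffSeries_mul hA hB (by omega) n ξ
  have hpoisson :=
    (hasCoeffSeries_poisson (s := s + 1) hA hB (by omega) n ξ).const_mul (1 / (2 * I))
  have hsigma := (hasCoeffSeries_sigmaB hA hB hs n ξ).const_mul (1 / 8)
  unfold symCoeff moyalSymbol
  rw [fCoeff_sub (hmul.add hpoisson).continuous hsigma.continuous,
    fCoeff_add hmul.continuous hpoisson.continuous, fCoeff_const_mul, fCoeff_const_mul]

/-- The operator `T_A T_B - T_{AB} - (1/2i) T_{{A,B}} + (1/8) T_{σ(A,B)}`, the remainder of the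
symbolic calculus, acting on Fourier coefficient sequences. -/
def compRemainder (χ : ℝ → ℝ) (ε : ℝ) (A B : Sym d) (c : Seq d) : Seq d := fun j =>
  paraC χ ε A (paraC χ ε B c) j - paraC χ ε (fun x ξ => A x ξ * B x ξ) c j -
    1 / (2 * I) * paraC χ ε (poisson A B) c j + 1 / 8 * paraC χ ε (sigmaB A B) c j

lemma compRemainder_eq_sub_paraC_moyalSymbol (hχ : IsCutoff χ) (hε₀ : 0 < ε) (hε₁ : ε < 1 / 4)
    {s : ℕ} (hA : SymBound μ (s + 2) MA A) (hB : SymBound ν (s + 2) MB B) (hs : d < s)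
    (c : Seq d) (j : Zd d) :
    compRemainder χ ε A B c j =
      paraC χ ε A (paraC χ ε B c) j - paraC χ ε (moyalSymbol A B) c j := by
  have hmoyal : paraC χ ε (moyalSymbol A B) c j = paraC χ ε (fun x ξ => A x ξ * B x ξ) c j +
      1 / (2 * I) * paraC χ ε (poisson A B) c j - 1 / 8 * paraC χ ε (sigmaB A B) c j := by
    obtain ⟨S, hS, -⟩ := exists_finset_of_cutFactor_ne_zero hχ hε₀ hε₁ j
    simp only [paraC_eq_sum _ c hS, symCoeff_moyalSymbol hA hB hs, Finset.mul_sum,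
      ← Finset.sum_add_distrib, ← Finset.sum_sub_distrib]
    refine Finset.sum_congr rfl fun k _ => ?_
    ring
  rw [compRemainder, hmoyal]
  ring

lemma hasSum_remainderKernel {s : ℕ} (hA : SymBound μ (s + 2) MA A)
    (hB : SymBound ν (s + 2) MB B) (hs : d < s) (hS : ∀ l, cutFactor χ ε j l ≠ 0 → l ∈ S)
    (k : Zd d) :
    HasSum (fun l => (fourierConst d : ℂ) * remainderKernel χ ε A B j l k)
      (fourierConst d * ∑ l ∈ S, (cutFactor χ ε j l : ℂ) * (cutFactor χ ε l k : ℂ) *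
        (symCoeff A (j - l) (mid j l) * symCoeff B (l - k) (mid l k)) -
      cutFactor χ ε j k * symCoeff (moyalSymbol A B) (j - k) (mid j k)) := by
  have hcomp : HasSum (fun l => (cutFactor χ ε j l : ℂ) * (cutFactor χ ε l k : ℂ) *
      (symCoeff A (j - l) (mid j l) * symCoeff B (l - k) (mid l k))) _ :=
    hasSum_sum_of_ne_finset_zero fun l hl => by
      rw [not_ne_iff.mp (mt (hS l) hl), ofReal_zero, zero_mul, zero_mul]
  have hmoyal := (Equiv.subLeft j).hasSum_iff.mpr
    (hasCoeffSeries_moyalSymbol hA hB hs (j - k) (mid j k)).hasSum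
  refine ((hcomp.mul_left _).sub (hmoyal.mul_left (cutFactor χ ε j k : ℂ))).congr_fun fun l => ?_
  simp only [Function.comp_apply, Equiv.subLeft_apply, sub_sub_sub_cancel_left, remainderKernel]
  ring

lemma exists_compRemainder_eq_sum (hχ : IsCutoff χ) (hε₀ : 0 < ε) (hε₁ : ε < 1 / 4) {s : ℕ}
    (hA : SymBound μ (s + 2) MA A) (hB : SymBound ν (s + 2) MB B) (hs : d < s) (c : Seq d)
    (j : Zd d) :
    ∃ (S : Finset (Zd d)) (W : Zd d → ℂ),
      (∀ k, HasSum (fun l => (fourierConst d : ℂ) * remainderKernel χ ε A B j l k) (W k)) ∧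
      compRemainder χ ε A B c j = (fourierConst d : ℂ) * ∑ k ∈ S, W k * c k := by
  obtain ⟨S, hS, hS'⟩ := exists_finset_of_cutFactor_ne_zero hχ hε₀ hε₁ j
  refine ⟨S, _, hasSum_remainderKernel hA hB hs hS, ?_⟩
  rw [compRemainder_eq_sub_paraC_moyalSymbol hχ hε₀ hε₁ hA hB hs,
    paraC_paraC_eq_sum A B c hS hS', paraC_eq_sum _ c hS, ← mul_sub, ← Finset.sum_sub_distrib]
  simp only [sub_mul]

end Composition

section Bound

variable {χ : ℝ → ℝ} {ε μ ν MA MB : ℝ} {n : ℕ} {A B : Sym d}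

lemma rpow_jb_mul_norm_le_of_hasSum_remainderKernel (hχ : IsCutoff χ) (hε₀ : 0 < ε)
    (hε₁ : ε < 1 / 4) (hn : d < n) (hA : SymBound μ (n + 3) MA A) (hB : SymBound ν (n + 3) MB B)
    (s : ℝ) {j k : Zd d} {w : ℂ}
    (hw : HasSum (fun l => (fourierConst d : ℂ) * remainderKernel χ ε A B j l k) w) :
    jb j ^ (s - μ - ν + 3) * ‖w‖ ≤ fourierConst d * (16 ^ |s - μ - ν + 3| *
      (6 * ((4 / ε) ^ 3 * (termConst d n μ ν * MA * MB)))) * convWeight n (j - k) * jb k ^ s := by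
  set σ := s - μ - ν + 3 with hσ
  have hjσ : 0 ≤ jb j ^ σ := Real.rpow_nonneg (jb_pos j).le σ
  have hexp : jb k ^ σ * jb k ^ (μ + ν - 3) = jb k ^ s := by
    rw [← Real.rpow_add (jb_pos k), hσ]
    ring_nf
  have hterm (l : Zd d) : ‖((jb j ^ σ : ℝ) : ℂ) *
      ((fourierConst d : ℂ) * remainderKernel χ ε A B j l k)‖ ≤ fourierConst d * (16 ^ |σ| *
        (6 * ((4 / ε) ^ 3 * (termConst d n μ ν * MA * MB)))) * jb k ^ s *
          (latticeWeight n (j - l) * latticeWeight n (l - k)) := by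
    rw [norm_mul, norm_mul, norm_fourierConst, Complex.norm_of_nonneg hjσ, mul_left_comm, ← hexp]
    refine (mul_le_mul_of_nonneg_left
      (rpow_jb_mul_norm_remainderKernel_le hχ hε₀ hε₁ hA hB σ j l k)
      (fourierConst_pos d).le).trans_eq ?_
    rw [kernelBound]
    ring
  have hsum := tsum_of_norm_bounded ((hasSum_convWeight hn j k).mul_left _) hterm
  rwa [(hw.mul_left _).tsum_eq, norm_mul, Complex.norm_of_nonneg hjσ, mul_right_comm] at hsum

lemma exists_hsNorm_compRemainder_le (hχ : IsCutoff χ) (hε₀ : 0 < ε) (hε₁ : ε < 1 / 4)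
    (hn : d < n) (μ ν s : ℝ) :
    ∃ C > 0, ∀ {MA MB : ℝ} {A B : Sym d}, SymBound μ (n + 3) MA A → SymBound ν (n + 3) MB B →
      ∀ c : Seq d, InHsSeq s c → InHsSeq (s - μ - ν + 3) (compRemainder χ ε A B c) ∧
        hsNorm (s - μ - ν + 3) (compRemainder χ ε A B c) ≤ C * MA * MB * hsNorm s c := by
  set K := fourierConst d ^ 2 *
    (16 ^ |s - μ - ν + 3| * (6 * ((4 / ε) ^ 3 * termConst d n μ ν))) with hK
  have hKpos : 0 < K := by
    have := fourierConst_pos d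
    have := termConst_pos d n μ ν
    positivity
  have hsum₀ : 0 ≤ ∑' m : Zd d, convWeight n m := tsum_nonneg (convWeight_nonneg n)
  refine ⟨K * (1 + ∑' m : Zd d, convWeight n m), by positivity, fun {MA MB A B} hA hB c hc => ?_⟩
  have hM : 0 ≤ K * MA * MB := mul_nonneg (mul_nonneg hKpos.le hA.nonneg) hB.nonneg
  obtain ⟨hmem, hle⟩ := hsNorm_le_of_le_convolution (σ := s - μ - ν + 3)
    (e := compRemainder χ ε A B c) (fun m => mul_nonneg hM (convWeight_nonneg n m))
    ((summable_convWeight hn).mul_left _) hc fun j => by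
      obtain ⟨S, W, hW, hE⟩ := exists_compRemainder_eq_sum hχ hε₀ hε₁ (s := n + 1) hA hB
        (by omega) c j
      refine ⟨S, ?_⟩
      calc jb j ^ (s - μ - ν + 3) * ‖compRemainder χ ε A B c j‖
          ≤ jb j ^ (s - μ - ν + 3) * (fourierConst d * ∑ k ∈ S, ‖W k * c k‖) := by
            rw [hE, norm_mul, norm_fourierConst]
            exact mul_le_mul_of_nonneg_left (mul_le_mul_of_nonneg_left (norm_sum_le _ _)
              (fourierConst_pos d).le) (Real.rpow_nonneg (jb_pos j).le _)
        _ = ∑ k ∈ S, fourierConst d * ((jb j ^ (s - μ - ν + 3) * ‖W k‖) * ‖c k‖) := by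
            simp only [Finset.mul_sum, norm_mul]
            exact Finset.sum_congr rfl fun k _ => by ring
        _ ≤ ∑ k ∈ S, K * MA * MB * convWeight n (j - k) * (jb k ^ s * ‖c k‖) :=
            Finset.sum_le_sum fun k _ => by
              refine (mul_le_mul_of_nonneg_left (mul_le_mul_of_nonneg_right
                (rpow_jb_mul_norm_le_of_hasSum_remainderKernel hχ hε₀ hε₁ hn hA hB s (hW k))
                (norm_nonneg (c k))) (fourierConst_pos d).le).trans_eq ?_
              rw [hK]
              ring
  refine ⟨hmem, hle.trans (mul_le_mul_of_nonneg_right ?_ (Real.sqrt_nonneg _))⟩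
  rw [tsum_mul_left]
  linarith

end Bound

/-! ### Symbols near the half-integer lattice -/

section EqNearMid

variable {A A' B B' : Sym d}

/-- Equality of two symbols for `ξ` near every midpoint `(j+k)/2`. These values determine the
paradifferential operators of a symbol and of its derivatives. -/
def EqNearMid (A A' : Sym d) : Prop :=
  ∀ j k : Zd d, ∀ᶠ ξ in nhds (mid j k), ∀ x, A x ξ = A' x ξ

lemma EqNearMid.pdx (h : EqNearMid A A') (i : Fin d) : EqNearMid (pdx i A) (pdx i A') :=
  fun j k => (h j k).mono fun _ hξ x =>
    congrArg (fun u : Fn d => fderiv ℝ u x (Pi.single i 1)) (funext hξ)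

lemma EqNearMid.pdxi (h : EqNearMid A A') (i : Fin d) : EqNearMid (pdxi i A) (pdxi i A') :=
  fun j k => (eventually_eventually_nhds.mpr (h j k)).mono fun _ hξ x =>
    congrArg (fun L : Vec d →L[ℝ] ℂ => L (Pi.single i 1))
      (EventuallyEq.fderiv_eq (hξ.mono fun _ hη => hη x))

lemma EqNearMid.mul (hA : EqNearMid A A') (hB : EqNearMid B B') :
    EqNearMid (fun x ξ => A x ξ * B x ξ) (fun x ξ => A' x ξ * B' x ξ) := fun j k => by
  filter_upwards [hA j k, hB j k] with ξ hAξ hBξ x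
  rw [hAξ, hBξ]

lemma EqNearMid.poisson (hA : EqNearMid A A') (hB : EqNearMid B B') :
    EqNearMid (poisson A B) (poisson A' B') := fun j k => by
  filter_upwards [eventually_all.mpr fun i => hA.pdx i j k,
    eventually_all.mpr fun i => hA.pdxi i j k, eventually_all.mpr fun i => hB.pdx i j k,
    eventually_all.mpr fun i => hB.pdxi i j k] with ξ hAx hAξ hBx hBξ x
  simp only [QLNLS.poisson, hAx, hAξ, hBx, hBξ]

lemma EqNearMid.sigmaB (hA : EqNearMid A A') (hB : EqNearMid B B') :
    EqNearMid (sigmaB A B) (sigmaB A' B') := fun j k => by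
  filter_upwards [eventually_all.mpr fun i => eventually_all.mpr fun i' => (hA.pdx i).pdx i' j k,
    eventually_all.mpr fun i => eventually_all.mpr fun i' => (hA.pdxi i).pdxi i' j k,
    eventually_all.mpr fun i => eventually_all.mpr fun i' => (hA.pdxi i).pdx i' j k,
    eventually_all.mpr fun i => eventually_all.mpr fun i' => (hB.pdx i).pdx i' j k,
    eventually_all.mpr fun i => eventually_all.mpr fun i' => (hB.pdxi i).pdxi i' j k,
    eventually_all.mpr fun i => eventually_all.mpr fun i' => (hB.pdx i).pdxi i' j k]
    with ξ hAxx hAξξ hAxξ hBxx hBξξ hBξx x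
  simp only [QLNLS.sigmaB, hAxx, hAξξ, hAxξ, hBxx, hBξξ, hBξx]

lemma EqNearMid.paraC_eq (h : EqNearMid A A') (χ : ℝ → ℝ) (ε : ℝ) (c : Seq d) :
    paraC χ ε A c = paraC χ ε A' c := by
  have hcoeff (j k : Zd d) : symCoeff A (j - k) (mid j k) = symCoeff A' (j - k) (mid j k) :=
    congrArg (fCoeff · (j - k)) (funext (h j k).self_of_nhds)
  unfold paraC
  simp only [hcoeff]

lemma EqNearMid.compRemainder_eq (hA : EqNearMid A A') (hB : EqNearMid B B') (χ : ℝ → ℝ) (ε : ℝ)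
    (c : Seq d) : compRemainder χ ε A B c = compRemainder χ ε A' B' c := by
  unfold compRemainder
  rw [hB.paraC_eq, hA.paraC_eq, (hA.mul hB).paraC_eq, (hA.poisson hB).paraC_eq,
    (hA.sigmaB hB).paraC_eq]

lemma half_le_rnorm_mid {j k : Zd d} (h : mid j k ≠ 0) : 1 / 2 ≤ rnorm (mid j k) := by
  obtain ⟨i, hi⟩ := Function.ne_iff.mp h
  have hne : j i + k i ≠ 0 := fun h₀ => hi (by simp only [mid, h₀, Int.cast_zero, zero_div]; rfl)
  have hone : (1 : ℝ) ≤ |((j i + k i : ℤ) : ℝ)| := by exact_mod_cast Int.one_le_abs hne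
  have hcoord : |mid j k i| = |((j i + k i : ℤ) : ℝ)| / 2 := by
    rw [mid, abs_div, abs_of_pos (two_pos : (0 : ℝ) < 2)]
  linarith [abs_apply_le_rnorm (mid j k) i]

/-- The symbol `𝒳_R(ξ) a(x,ξ)`, the restriction of `a` to high frequencies. -/
def highFreq (χ : ℝ → ℝ) (R : ℝ) (a : Sym d) : Sym d := fun x ξ => ((cutXR χ R ξ : ℝ) : ℂ) * a x ξ

variable {χ : ℝ → ℝ}

lemma cutXR_eq_one (hχ : IsCutoff χ) {R : ℝ} (hR : 0 < R) {ξ : Vec d}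
    (hξ : 8 / 5 * R ≤ rnorm ξ) : cutXR χ R ξ = 1 := by
  have habs : 8 / 5 ≤ |rnorm ξ / R| := ((le_div_iff₀ hR).mpr hξ).trans (le_abs_self _)
  rw [cutXR, hχ.eq_zero _ habs, sub_zero]

lemma eqNearMid_highFreq_quarter (hχ : IsCutoff χ) {R : ℝ} (hR : 0 < R) (hR' : R < 1 / 4)
    (a : Sym d) : EqNearMid (highFreq χ R a) (highFreq χ (1 / 4) a) := by
  intro j k
  suffices h : ∀ᶠ ξ in nhds (mid j k), cutXR χ R ξ = cutXR χ (1 / 4) ξ from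
    h.mono fun ξ hξ x => by rw [highFreq, highFreq, hξ]
  have hcont := (continuous_rnorm (d := d)).continuousAt (x := mid j k)
  by_cases h₀ : mid j k = 0
  · have hlt : rnorm (mid j k) < 5 / 4 * R := by
      rw [h₀, rnorm_eq_norm, WithLp.toLp_zero, norm_zero]
      positivity
    filter_upwards [hcont.eventually (gt_mem_nhds hlt)] with ξ hξ
    rw [cutXR_eq_zero hχ hR hξ.le, cutXR_eq_zero hχ (by norm_num) (by linarith)]
  · have hlt : 2 / 5 < rnorm (mid j k) := by linarith [half_le_rnorm_mid h₀]
    filter_upwards [hcont.eventually (lt_mem_nhds hlt)] with ξ hξ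
    rw [cutXR_eq_one hχ hR (by linarith), cutXR_eq_one hχ (by norm_num) (by linarith)]

end EqNearMid

section Main

variable {χ : ℝ → ℝ} {ε : ℝ} {n : ℕ}

lemma exists_hsNorm_compRemainder_highFreq_le (hχ : IsCutoff χ) (hε₀ : 0 < ε) (hε₁ : ε < 1 / 4)
    (hn : d < n) (m₁ m₂ s : ℝ) :
    ∃ C > 0, ∀ R : ℝ, 1 / 4 ≤ R → ∀ (a b : Sym d) (c : Seq d),
      InSymClass m₁ (n + 3) a → InSymClass m₂ (n + 3) b → InHsSeq s c →
      InHsSeq (s - m₁ - m₂ + 2) (compRemainder χ ε (highFreq χ R a) (highFreq χ R b) c) ∧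
      hsNorm (s - m₁ - m₂ + 2) (compRemainder χ ε (highFreq χ R a) (highFreq χ R b) c) ≤
        C * R⁻¹ * symNorm m₁ (n + 3) a * symNorm m₂ (n + 3) b * hsNorm s c := by
  obtain ⟨K₁, hK₁, hcut₁⟩ := exists_symBound_cutXR (d := d) hχ (R₀ := 1 / 4) (by norm_num)
    zero_le_one le_rfl (n + 3)
  obtain ⟨K₀, hK₀, hcut₀⟩ := exists_symBound_cutXR (d := d) hχ (R₀ := 1 / 4) (by norm_num)
    le_rfl zero_le_one (n + 3)
  obtain ⟨C, hC, hrem⟩ := exists_hsNorm_compRemainder_le hχ hε₀ hε₁ hn (1 + m₁) (0 + m₂) s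
  refine ⟨C * (2 ^ (n + 3) * K₁) * (2 ^ (n + 3) * K₀), by positivity,
    fun R hR a b c ha hb hc => ?_⟩
  obtain ⟨hmem, hle⟩ :=
    hrem ((hcut₁ R hR).mul ha.symBound) ((hcut₀ R hR).mul hb.symBound) c hc
  rw [show s - (1 + m₁) - (0 + m₂) + 3 = s - m₁ - m₂ + 2 by ring] at hmem hle
  refine ⟨hmem, hle.trans_eq ?_⟩
  rw [Real.rpow_neg_one, neg_zero, Real.rpow_zero]
  ring

end Main

theorem statement_7_general {d n : ℕ} (hn : d < n) (m₁ m₂ : ℝ) {χ : ℝ → ℝ} (hχ : IsCutoff χ)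
    {ε : ℝ} (hε₀ : 0 < ε) (hε₁ : ε < 1 / 4) (s : ℝ) :
    ∃ C > 0, ∀ R : ℝ, 0 < R → ∀ (a b : Sym d) (c : Seq d),
      InSymClass m₁ (n + 3) a → InSymClass m₂ (n + 3) b → InHsSeq s c →
      InHsSeq (s - m₁ - m₂ + 2) (compRemainder χ ε (highFreq χ R a) (highFreq χ R b) c) ∧
      hsNorm (s - m₁ - m₂ + 2) (compRemainder χ ε (highFreq χ R a) (highFreq χ R b) c) ≤
        C * R⁻¹ * symNorm m₁ (n + 3) a * symNorm m₂ (n + 3) b * hsNorm s c := by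
  obtain ⟨C, hC, hlarge⟩ := exists_hsNorm_compRemainder_highFreq_le hχ hε₀ hε₁ hn m₁ m₂ s
  refine ⟨C, hC, fun R hR a b c ha hb hc => ?_⟩
  rcases le_or_gt (1 / 4) R with hR' | hR'
  · exact hlarge R hR' a b c ha hb hc
  · rw [(eqNearMid_highFreq_quarter hχ hR hR' a).compRemainder_eq
      (eqNearMid_highFreq_quarter hχ hR hR' b)]
    obtain ⟨hmem, hle⟩ := hlarge (1 / 4) le_rfl a b c ha hb hc
    have hinv : (1 / 4 : ℝ)⁻¹ ≤ R⁻¹ := inv_anti₀ hR hR'.le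
    refine ⟨hmem, hle.trans ?_⟩
    exact mul_le_mul_of_nonneg_right (mul_le_mul_of_nonneg_right (mul_le_mul_of_nonneg_right
      (mul_le_mul_of_nonneg_left hinv hC.le) ha.symBound.nonneg) hb.symBound.nonneg)
      (Real.sqrt_nonneg _)

/-- Proposition 2.5(ii): composition of paradifferential operators with
high-frequency truncated symbols `a_R = 𝒳_R a`, `b_R = 𝒳_R b`, with `m₁+m₂-2 ≤ 0`:
`T_{a_R} ∘ T_{b_R} = T_{a_R b_R} + (1/2i) T_{{a_R,b_R}} - (1/8) T_{σ(a_R,b_R)} + R(a_R,b_R)`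
with `‖R(a_R,b_R)h‖_{H^{s-m₁-m₂+2}} ≤ C R^{-1} |a|_{𝒩^{m₁}_{s₀+4}}|b|_{𝒩^{m₂}_{s₀+4}}‖h‖_{H^s}`. -/
theorem statement_7 (d : ℕ) (hd : 1 ≤ d) (s₀ : ℕ) (hs₀ : d < s₀) (m₁ m₂ : ℝ)
    (hm : m₁ + m₂ - 2 ≤ 0)
    (χ : ℝ → ℝ) (hχ : IsCutoff χ) (ε : ℝ) (hε₀ : 0 < ε) (hε₁ : ε < 1 / 4) (s : ℝ) :
    ∃ C > (0 : ℝ), ∀ (R : ℝ), 0 < R → ∀ (a b : Sym d) (c : Seq d),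
      InSymClass m₁ (s₀ + 4) a → InSymClass m₂ (s₀ + 4) b → InHsSeq s c →
      hsNorm (s - m₁ - m₂ + 2)
          (fun j => paraC χ ε (fun x ξ => ((cutXR χ R ξ : ℝ) : ℂ) * a x ξ)
              (paraC χ ε (fun x ξ => ((cutXR χ R ξ : ℝ) : ℂ) * b x ξ) c) j
            - paraC χ ε (fun x ξ => (((cutXR χ R ξ : ℝ) : ℂ) * a x ξ) *
                (((cutXR χ R ξ : ℝ) : ℂ) * b x ξ)) c j
            - 1 / (2 * Complex.I) * paraC χ ε
                (poisson (fun x ξ => ((cutXR χ R ξ : ℝ) : ℂ) * a x ξ)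
                  (fun x ξ => ((cutXR χ R ξ : ℝ) : ℂ) * b x ξ)) c j
            + 1 / 8 * paraC χ ε
                (sigmaB (fun x ξ => ((cutXR χ R ξ : ℝ) : ℂ) * a x ξ)
                  (fun x ξ => ((cutXR χ R ξ : ℝ) : ℂ) * b x ξ)) c j)
        ≤ C * R⁻¹ * symNorm m₁ (s₀ + 4) a * symNorm m₂ (s₀ + 4) b * hsNorm s c := by
  obtain ⟨C, hC, h⟩ := statement_7_general (hs₀.trans s₀.lt_succ_self) m₁ m₂ hχ hε₀ hε₁ s
  exact ⟨C, hC, fun R hR a b c ha hb hc => (h R hR a b c ha hb hc).2⟩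

end QLNLS
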